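/- arXiv:1910.10943 — 2 statements merged into one kernel-verified Lean document; each statement's English description precedes it below -/
import Mathlib

section
/- If L and L' are even lattices, each of signature (1,9), rank 10, and discriminant -13, primitively embedded in the K3 lattice Λ_{K3}, then the discriminant form of U ⊕ L' is isomorphic to the negative of the discriminant form of L; consequently the discriminant of U ⊕ L' equals 13 = -disc(L). -/
open Matrix

/-- The bilinear form attached to a Gram matrix `G`. -/
def BF {ι : Type*} [Fintype ι] (G : Matrix ι ι ℤ) (x y : ι → ℤ) : ℤ :=
  x ⬝ᵥ G.mulVec y

/-- The hyperbolic plane `U`. -/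
def UMat : Matrix (Fin 2) (Fin 2) ℤ := !![0, 1; 1, 0]

/-- The (negative definite) root lattice `A₁`. -/
def A1Mat : Matrix (Fin 1) (Fin 1) ℤ := !![-2]

/-- The (negative definite) root lattice `A₂`. -/
def A2Mat : Matrix (Fin 2) (Fin 2) ℤ := !![-2, 1; 1, -2]

/-- The negative definite root lattice `E₈` (Bourbaki numbering). -/
def E8Mat : Matrix (Fin 8) (Fin 8) ℤ :=
  !![-2,0,1,0,0,0,0,0;
     0,-2,0,1,0,0,0,0;
     1,0,-2,1,0,0,0,0;
     0,1,1,-2,1,0,0,0;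
     0,0,0,1,-2,1,0,0;
     0,0,0,0,1,-2,1,0;
     0,0,0,0,0,1,-2,1;
     0,0,0,0,0,0,1,-2]

/-- The negative definite root lattice `E₇` (first seven Bourbaki nodes of `E₈`). -/
def E7Mat : Matrix (Fin 7) (Fin 7) ℤ :=
  E8Mat.submatrix (Fin.castLE (by norm_num)) (Fin.castLE (by norm_num))

/-- The negative definite root lattice `E₆` (first six Bourbaki nodes of `E₈`). -/
def E6Mat : Matrix (Fin 6) (Fin 6) ℤ :=
  E8Mat.submatrix (Fin.castLE (by norm_num)) (Fin.castLE (by norm_num))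

/-- Orthogonal direct sum of Gram matrices. -/
def dsum {ι κ : Type*} (G : Matrix ι ι ℤ) (H : Matrix κ κ ℤ) :
    Matrix (ι ⊕ κ) (ι ⊕ κ) ℤ :=
  Matrix.fromBlocks G 0 0 H

/-- Index type for the K3 lattice `U^{⊕3} ⊕ E₈^{⊕2}`. -/
abbrev K3Ix : Type := (Fin 2 ⊕ Fin 2 ⊕ Fin 2) ⊕ (Fin 8 ⊕ Fin 8)

/-- Gram matrix of the K3 lattice `U^{⊕3} ⊕ E₈^{⊕2}`. -/
def K3Mat : Matrix K3Ix K3Ix ℤ := dsum (dsum UMat (dsum UMat UMat)) (dsum E8Mat E8Mat)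

/-- `f` is a primitive isometric embedding of the lattice with Gram matrix `G`
into the lattice with Gram matrix `H` (primitive: the image is closed under division). -/
def IsPrimEmb {ι κ : Type*} [Fintype ι] [Fintype κ] (G : Matrix ι ι ℤ) (H : Matrix κ κ ℤ)
    (f : (ι → ℤ) →ₗ[ℤ] (κ → ℤ)) : Prop :=
  Function.Injective f ∧ (∀ x y, BF H (f x) (f y) = BF G x y) ∧
    ∀ (c : ℤ) (x : κ → ℤ), c ≠ 0 → c • x ∈ LinearMap.range f → x ∈ LinearMap.range f

/-- The orthogonal complement of a submodule with respect to the form given by `H`. -/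
def orthComp {κ : Type*} [Fintype κ] (H : Matrix κ κ ℤ) (S : Submodule ℤ (κ → ℤ)) :
    Submodule ℤ (κ → ℤ) where
  carrier := {x | ∀ y ∈ S, BF H x y = 0}
  add_mem' := by
    intro a b ha hb y hy
    have h1 := ha y hy
    have h2 := hb y hy
    simp only [BF, add_dotProduct] at *
    omega
  zero_mem' := by
    intro y hy
    simp [BF]
  smul_mem' := by
    intro c a ha y hy
    have h1 := ha y hy
    simp only [BF, smul_dotProduct] at *
    simp [h1]

/-- The two lattices given by Gram matrices `G`, `H` are isometric. -/
def IsomGram {ι κ : Type*} [Fintype ι] [Fintype κ] (G : Matrix ι ι ℤ) (H : Matrix κ κ ℤ) : Prop :=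
  ∃ e : (ι → ℤ) ≃ₗ[ℤ] (κ → ℤ), ∀ x y, BF H (e x) (e y) = BF G x y

/-- The submodule `S` of the lattice with Gram matrix `H`, equipped with the restricted
form, is isometric to the lattice with Gram matrix `G`. -/
def SubIsom {ι κ : Type*} [Fintype ι] [Fintype κ] (H : Matrix κ κ ℤ)
    (S : Submodule ℤ (κ → ℤ)) (G : Matrix ι ι ℤ) : Prop :=
  ∃ e : (ι → ℤ) ≃ₗ[ℤ] S, ∀ x y, BF H (e x : κ → ℤ) (e y : κ → ℤ) = BF G x y

/-- The lattice with Gram matrix `G` is even. -/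
def EvenGram {ι : Type*} [Fintype ι] (G : Matrix ι ι ℤ) : Prop := ∀ x, 2 ∣ BF G x x

/-- The lattice with Gram matrix `G` has signature `(p, q)`. -/
def SigIs {ι : Type*} [Fintype ι] [DecidableEq ι] (G : Matrix ι ι ℤ) (p q : ℕ) : Prop :=
  ∃ d : ι → ℝ, (∀ i, d i = 1 ∨ d i = -1) ∧ Nat.card {i // d i = 1} = p ∧
    Nat.card {i // d i = -1} = q ∧
    ∃ P : Matrix ι ι ℝ, IsUnit P.det ∧
      Pᵀ * (G.map (Int.cast : ℤ → ℝ)) * P = Matrix.diagonal d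

/-- The discriminant group `A_L = L^*/L` of a lattice with Gram matrix `G`,
realized as the cokernel of `G`. -/
abbrev Coker {ι : Type*} [Fintype ι] [DecidableEq ι] (G : Matrix ι ι ℤ) :=
  (ι → ℤ) ⧸ LinearMap.range (Matrix.toLin' G)

/-- The value `x᷉ᵀ G⁻¹ x` of the discriminant quadratic form at (the class of) `x`. -/
noncomputable def qval {ι : Type*} [Fintype ι] [DecidableEq ι] (G : Matrix ι ι ℤ) (x : ι → ℤ) : ℚ :=
  (fun i => (x i : ℚ)) ⬝ᵥ ((G.map (Int.cast : ℤ → ℚ))⁻¹).mulVec (fun i => (x i : ℚ))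

/-- The discriminant form of `G` is isomorphic to minus the discriminant form of `H`. -/
def QIsoNeg {ι κ : Type*} [Fintype ι] [DecidableEq ι] [Fintype κ] [DecidableEq κ]
    (G : Matrix ι ι ℤ) (H : Matrix κ κ ℤ) : Prop :=
  ∃ e : Coker G ≃+ Coker H, ∀ x : ι → ℤ, ∃ y : κ → ℤ,
    e (Submodule.Quotient.mk x) = Submodule.Quotient.mk y ∧
    qval G x + qval H y ∈ AddSubgroup.zmultiples (2 : ℚ)

/-- Inclusion of the first `U` summand into the K3 lattice. -/
def inU1 (x : Fin 2 → ℤ) : K3Ix → ℤ := Sum.elim (Sum.elim x 0) 0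

/-- Inclusion of the first `E₈` summand into the K3 lattice. -/
def inE81 (x : Fin 8 → ℤ) : K3Ix → ℤ := Sum.elim 0 (Sum.elim x 0)

/-- Inclusion of the second `E₈` summand into the K3 lattice. -/
def inE82 (x : Fin 8 → ℤ) : K3Ix → ℤ := Sum.elim 0 (Sum.elim 0 x)

lemma cpow_half_pos_mul (r : ℝ) (hr : 0 < r) (z : ℂ) (hz : z ≠ 0) :
    ((r : ℂ) * z) ^ (1/2 : ℂ) = (Real.sqrt r : ℂ) * z ^ (1/2 : ℂ) := by
  rw [Complex.cpow_def_of_ne_zero (by simp [hr.ne', hz]), Complex.cpow_def_of_ne_zero hz,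
    Complex.log_ofReal_mul hr hz, add_mul, Complex.exp_add]
  congr 1
  rw [Real.sqrt_eq_rpow, Complex.ofReal_cpow hr.le,
    Complex.cpow_def_of_ne_zero (by simp [hr.ne']), Complex.ofReal_log hr.le]
  simp

lemma theta_even_shift (a : ℕ) (τ : ℂ) : jacobiTheta (2 * a + τ) = jacobiTheta τ := by
  induction a with
  | zero => simp
  | succ n ih =>
    rw [← ih, ← jacobiTheta_two_add (2 * n + τ)]
    congr 1; push_cast; ring

lemma theta_func (τ : ℂ) : jacobiTheta τ = 1 / (-Complex.I * τ) ^ (1/2 : ℂ) * jacobiTheta (-1/τ) := by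
  rw [jacobiTheta_eq_jacobiTheta₂, jacobiTheta_eq_jacobiTheta₂, jacobiTheta₂_functional_equation]
  simp

open Complex Filter Topology in
lemma theta_lim (a : ℕ) (ha : 0 < a) :
    Tendsto (fun ε : ℝ => (Real.sqrt ε : ℂ) * jacobiTheta (1 / (2 * a) + I * ε)) (𝓝[>] 0)
      (𝓝 (1 / (-I * (1 / (2 * a))) ^ (1/2 : ℂ) * (1 / (2 * a)))) := by
  set d : ℝ := 2 * a with hd
  have hdc : (2 * (a : ℂ)) = (d : ℂ) := by simp [hd]
  have hd0 : 0 < d := by positivity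
  rw [hdc]
  have hdc0 : (d : ℂ) ≠ 0 := by exact_mod_cast hd0.ne'
  have hone : ∀ ε : ℝ, (1 + I * d * ε : ℂ) ≠ 0 := by
    intro ε h
    have := congrArg Complex.re h
    simp at this
  have key : ∀ ε : ℝ, 0 < ε → (Real.sqrt ε : ℂ) * jacobiTheta (1 / d + I * ε) =
      (1 / (-I * (1 / d + I * ε)) ^ (1/2 : ℂ)) * (1 / ((d : ℂ)^2 / (1 + I * d * ε)) ^ (1/2 : ℂ)) *
        jacobiTheta (-(1 / d) + I * (1 / (d^2 * ε) : ℝ)) := by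
    intro ε hε
    have hεc : (ε : ℂ) ≠ 0 := by exact_mod_cast hε.ne'
    have hτ : (1 / d + I * ε : ℂ) ≠ 0 := by
      intro h
      have := congrArg Complex.im h
      simp [← ofReal_inv] at this
      exact hε.ne' this
    have hτ' : (1 / d + I * ε : ℂ) = (1 + I * d * ε) / d := by field_simp
    rw [theta_func (1 / d + I * ε), ← theta_even_shift a (-1 / _), hdc]
    have h2 : (d : ℂ) + -1 / (1 / d + I * ε) = I * (d ^ 2 * ε / (1 + I * d * ε)) := by
      rw [hτ']
      have h1 := hone ε
      have h2 : (1 + d * I * ε : ℂ) ≠ 0 := by rwa [mul_comm (d : ℂ) I]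
      rw [div_div_eq_mul_div, mul_div_assoc', eq_div_iff h1, add_mul, div_mul_cancel₀ _ h1]
      ring
    rw [h2, theta_func (I * _)]
    have h3 : -I * (I * ((d:ℂ) ^ 2 * ε / (1 + I * d * ε))) = ε * ((d:ℂ) ^ 2 / (1 + I * d * ε)) := by
      have : -I * I = 1 := by simp
      linear_combination ((d:ℂ) ^ 2 * ε / (1 + I * d * ε)) * this
    have h4 : -1 / (I * ((d:ℂ) ^ 2 * ε / (1 + I * d * ε))) = -(1 / d) + I * (1 / (d^2 * ε) : ℝ) := by
      have := hone ε
      push_cast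
      field_simp
      linear_combination (-1 : ℂ) * I_sq
    rw [h3, h4, cpow_half_pos_mul ε hε _ (div_ne_zero (pow_ne_zero _ hdc0) (hone ε))]
    have : (Real.sqrt ε : ℂ) ≠ 0 := by
      exact_mod_cast (Real.sqrt_pos.2 hε).ne'
    field_simp
  have hlim : Tendsto (fun ε : ℝ => (1 / (-I * (1 / d + I * ε)) ^ (1/2 : ℂ)) * (1 / ((d : ℂ)^2 / (1 + I * d * ε)) ^ (1/2 : ℂ)) *
        jacobiTheta (-(1 / d) + I * (1 / (d^2 * ε) : ℝ))) (𝓝[>] 0)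
      (𝓝 (1 / (-I * (1 / d)) ^ (1/2 : ℂ) * (1 / d) * 1)) := by
    refine Tendsto.mul (Tendsto.mul ?_ ?_) ?_
    · have hc : ContinuousAt (fun ε : ℝ => (1 / (-I * (1 / d + I * ε)) ^ (1/2 : ℂ))) 0 := by
        refine ContinuousAt.div continuousAt_const ?_ ?_
        · refine ContinuousAt.cpow (by fun_prop) continuousAt_const ?_
          right
          simp [← ofReal_inv, hd0.ne']
        · simp [cpow_eq_zero_iff, hd0.ne']
      have := hc.tendsto.mono_left (nhdsWithin_le_nhds (s := Set.Ioi 0))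
      simpa using this
    · have hc : ContinuousAt (fun ε : ℝ => (1 / ((d : ℂ)^2 / (1 + I * d * ε)) ^ (1/2 : ℂ))) 0 := by
        refine ContinuousAt.div continuousAt_const ?_ ?_
        · refine ContinuousAt.cpow ?_ continuousAt_const ?_
          · refine ContinuousAt.div continuousAt_const (by fun_prop) (hone 0)
          · left
            simp
            rw [← ofReal_pow, ofReal_re]
            positivity
        · simp [cpow_eq_zero_iff, hd0.ne']
      have := hc.tendsto.mono_left (nhdsWithin_le_nhds (s := Set.Ioi 0))
      have h5 : ((d:ℂ)^2) ^ (2⁻¹ : ℂ) = d := by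
        have h6 : ((2 : ℕ) : ℂ)⁻¹ = 2⁻¹ := by norm_num
        rw [← h6]
        apply pow_cpow_nat_inv two_ne_zero
        · rw [arg_ofReal_of_nonneg hd0.le]; simp; positivity
        · rw [arg_ofReal_of_nonneg hd0.le]; simp; positivity
      simpa [h5] using this
    · have h1 : Tendsto (fun ε : ℝ => (1 / (d^2 * ε) : ℝ)) (𝓝[>] 0) atTop := by
        simp_rw [one_div, mul_inv]
        exact Tendsto.const_mul_atTop (by positivity) tendsto_inv_nhdsGT_zero
      have h2 : Tendsto (fun ε : ℝ => (-(1 / d) + I * (1 / (d^2 * ε) : ℝ) : ℂ)) (𝓝[>] 0) (comap im atTop) := by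
        rw [tendsto_comap_iff]
        refine h1.congr fun ε => ?_
        simp only [Function.comp, add_im, neg_im, mul_im, I_re, I_im, ofReal_re, ofReal_im]
        rw [← ofReal_one, ← ofReal_div, ofReal_im]
        ring
      have h3 := (isBigO_at_im_infty_jacobiTheta_sub_one.comp_tendsto h2)
      have h4 : Tendsto (fun ε : ℝ => Real.exp (-Real.pi * (1 / (d^2 * ε) : ℝ))) (𝓝[>] 0) (𝓝 0) := by
        apply Real.tendsto_exp_atBot.comp
        exact Tendsto.const_mul_atTop_of_neg (by simp [Real.pi_pos]) h1
      have h5 := h3.trans_tendsto (h4.congr fun ε => by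
        simp only [Function.comp, add_im, neg_im, mul_im, I_re, I_im, ofReal_re, ofReal_im]
        rw [← ofReal_one, ← ofReal_div, ofReal_im]
        ring_nf)
      have := h5.add_const 1
      simpa [Function.comp_def] using this
  rw [mul_one] at hlim
  refine hlim.congr' ?_
  filter_upwards [self_mem_nhdsWithin] with ε hε
  exact (key ε hε).symm

open Complex Filter Topology HurwitzZeta in
lemma evenKernel_lim (N : ℕ) (hN : 0 < N) (b : UnitAddCircle) :
    Tendsto (fun ε : ℝ => Real.sqrt ε * evenKernel b ((N:ℝ)^2 * ε)) (𝓝[>] 0) (𝓝 (1 / N)) := by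
  have hN' : (0:ℝ) < N := by exact_mod_cast hN
  have h1 : Tendsto (fun ε : ℝ => (1 / ((N:ℝ)^2 * ε) : ℝ)) (𝓝[>] 0) atTop := by
    simp_rw [one_div, mul_inv]
    exact Tendsto.const_mul_atTop (by positivity) tendsto_inv_nhdsGT_zero
  obtain ⟨p, hp, hO⟩ := isBigO_atTop_cosKernel_sub b
  have h2 : Tendsto (fun x : ℝ => Real.exp (-p * x)) atTop (𝓝 0) :=
    Real.tendsto_exp_atBot.comp (Tendsto.const_mul_atTop_of_neg (by linarith) tendsto_id)
  have h3 := ((hO.trans_tendsto h2).comp h1).add_const 1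
  have h4 := h3.const_mul (1 / (N:ℝ))
  simp only [zero_add, mul_one, Function.comp_def, sub_add_cancel] at h4
  refine h4.congr' ?_
  filter_upwards [self_mem_nhdsWithin] with ε hε
  have hε : 0 < ε := hε
  rw [evenKernel_functional_equation, ← Real.sqrt_eq_rpow, Real.sqrt_mul (by positivity),
    Real.sqrt_sq hN'.le]
  have := (Real.sqrt_pos.2 hε).ne'
  field_simp

open Complex Filter Topology HurwitzZeta in
lemma theta_split (a N : ℕ) [NeZero N] (E : ℤ) (ha : 0 < a) (h : 4 * E * a = N) (ε : ℝ) (hε : 0 < ε) :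
    jacobiTheta (1 / (2 * a) + I * ε) = ∑ r : Fin N,
      ZMod.stdAddChar (((E * (r : ℕ) ^ 2 : ℤ)) : ZMod N) *
        ((evenKernel (((r : ℕ) / N : ℝ) : UnitAddCircle) ((N:ℝ)^2 * ε) : ℝ) : ℂ) := by
  have hNp : (0:ℝ) < N := by exact_mod_cast Nat.pos_of_ne_zero (NeZero.ne N)
  have hNc : (N : ℂ) ≠ 0 := by exact_mod_cast NeZero.ne N
  have hac : (a : ℂ) ≠ 0 := by exact_mod_cast ha.ne'
  have hτ : 0 < (1 / (2 * a) + I * ε : ℂ).im := by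
    have : (1 / (2 * a) : ℂ) = ((1 / (2 * a) : ℝ) : ℂ) := by push_cast; rfl
    rw [this]; simpa using hε
  have hs := hasSum_jacobiTheta₂_term 0 hτ
  rw [← jacobiTheta_eq_jacobiTheta₂] at hs
  have hs2 := ((Equiv.prodComm _ _).trans (Int.divModEquiv N).symm).hasSum_iff.mpr hs
  refine hs2.unique ?_
  have hterm : ∀ (r : Fin N) (m : ℤ), jacobiTheta₂_term ((r : ℕ) + m * N) 0 (1 / (2 * a) + I * ε)
      = ZMod.stdAddChar (((E * (r : ℕ) ^ 2 : ℤ)) : ZMod N) *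
        ((Real.exp (-Real.pi * (m + (r : ℕ) / N) ^ 2 * ((N:ℝ)^2 * ε)) : ℝ) : ℂ) := by
    intro r m
    have h1 : (((E * (r : ℕ) ^ 2 : ℤ)) : ZMod N) = ((E * ((r : ℕ) + m * N) ^ 2 : ℤ) : ZMod N) := by
      push_cast; simp
    have hE : (E : ℂ) / N = 1 / (4 * a) := by
      have : (4 * E * a : ℂ) = N := by exact_mod_cast h
      field_simp; linear_combination this
    rw [h1, ZMod.stdAddChar_coe, jacobiTheta₂_term, ofReal_exp, ← Complex.exp_add]
    congr 1
    have e1 : (2 * Real.pi * I * ((E * ((r : ℕ) + m * N) ^ 2 : ℤ) : ℂ) / N : ℂ)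
       = 2 * Real.pi * I * ((r : ℕ) + m * N) ^ 2 * (E / N) := by push_cast; ring
    rw [e1, hE]
    push_cast
    field_simp
    linear_combination (8 : ℂ) * a * ((r : ℕ) + m * N) ^ 2 * ε  * I_sq
  have hsum : Summable (fun p : Fin N × ℤ => jacobiTheta₂_term ((p.1 : ℕ) + p.2 * N) 0 (1 / (2 * a) + I * ε)) := by
    refine hs2.summable.congr fun p => ?_
    simp [Function.comp, Int.divModEquiv]
    try ring_nf
  have h3 : ∀ r : Fin N, HasSum (fun m : ℤ => jacobiTheta₂_term ((r : ℕ) + m * N) 0 (1 / (2 * a) + I * ε))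
     (ZMod.stdAddChar (((E * (r : ℕ) ^ 2 : ℤ)) : ZMod N) *
        ((evenKernel (((r : ℕ) / N : ℝ) : UnitAddCircle) ((N:ℝ)^2 * ε) : ℝ) : ℂ)) := by
    intro r
    simp_rw [hterm r]
    apply HasSum.mul_left
    exact Complex.hasSum_ofReal.2 (hasSum_int_evenKernel ((r : ℕ) / N : ℝ) (by positivity))
  have h4 := hsum.hasSum.prod_fiberwise h3
  have h5 := h4.unique (hasSum_fintype _)
  rw [← h5]
  convert hsum.hasSum using 2 with p
  simp [Function.comp, Int.divModEquiv]
  try ring_nf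

lemma sum_zmod_fin (N : ℕ) [NeZero N] (f : ZMod N → ℂ) :
    ∑ t : ZMod N, f t = ∑ r : Fin N, f ((r : ℕ) : ZMod N) := by
  symm
  refine Fintype.sum_bijective (fun r : Fin N => ((r : ℕ) : ZMod N)) ?_ _ _ (fun _ => rfl)
  rw [Fintype.bijective_iff_injective_and_card]
  refine ⟨fun r s h => ?_, by simp [ZMod.card]⟩
  have := (ZMod.natCast_eq_natCast_iff' _ _ _).1 h
  rw [Nat.mod_eq_of_lt r.2, Nat.mod_eq_of_lt s.2] at this
  exact Fin.ext this

open Complex Filter Topology HurwitzZeta in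
/-- The exact value (up to a positive factor) of the one-dimensional Gauss sum. -/
lemma gauss_pos (a N : ℕ) [NeZero N] (E : ℤ) (ha : 0 < a) (h : 4 * E * a = N) :
    ∃ r : ℝ, 0 < r ∧ ∑ t : ZMod N, ZMod.stdAddChar ((E : ZMod N) * t ^ 2) =
      r * cexp (Real.pi / 4 * I) := by
  have hNp : (0:ℝ) < N := by exact_mod_cast Nat.pos_of_ne_zero (NeZero.ne N)
  have hNc : (N : ℂ) ≠ 0 := by exact_mod_cast NeZero.ne N
  have hac : (0:ℝ) < a := by exact_mod_cast ha
  have h1 := theta_lim a ha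
  have h2 : Tendsto (fun ε : ℝ => (Real.sqrt ε : ℂ) * jacobiTheta (1 / (2 * a) + I * ε)) (𝓝[>] 0)
      (𝓝 (∑ r : Fin N, ZMod.stdAddChar (((E * (r : ℕ) ^ 2 : ℤ)) : ZMod N) * ((1 / N : ℝ) : ℂ))) := by
    have h3 : Tendsto (fun ε : ℝ => ∑ r : Fin N,
      ZMod.stdAddChar (((E * (r : ℕ) ^ 2 : ℤ)) : ZMod N) *
        ((Real.sqrt ε * evenKernel (((r : ℕ) / N : ℝ) : UnitAddCircle) ((N:ℝ)^2 * ε) : ℝ) : ℂ)) (𝓝[>] 0)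
      (𝓝 (∑ r : Fin N, ZMod.stdAddChar (((E * (r : ℕ) ^ 2 : ℤ)) : ZMod N) * ((1 / N : ℝ) : ℂ))) := by
      refine tendsto_finsetSum _ fun r _ => Tendsto.const_mul _ ?_
      exact (continuous_ofReal.tendsto _).comp (evenKernel_lim N (Nat.pos_of_ne_zero (NeZero.ne N)) _)
    refine h3.congr' ?_
    filter_upwards [self_mem_nhdsWithin] with ε hε
    rw [theta_split a N E ha h ε hε, Finset.mul_sum]
    refine Finset.sum_congr rfl fun r _ => ?_
    push_cast; ring
  have h4 := tendsto_nhds_unique h2 h1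
  rw [← Finset.sum_mul] at h4
  rw [sum_zmod_fin]
  have h5 : (∑ r : Fin N, ZMod.stdAddChar ((E : ZMod N) * ((r : ℕ) : ZMod N) ^ 2) : ℂ) =
    ∑ r : Fin N, ZMod.stdAddChar (((E * (r : ℕ) ^ 2 : ℤ)) : ZMod N) := by
    push_cast; rfl
  rw [h5]
  have h6 : 1 / (-I * (1 / (2 * a))) ^ (1/2 : ℂ) = (Real.sqrt (1 / (2 * a)) : ℂ)⁻¹ * cexp (Real.pi / 4 * I) := by
    have : (-I * (1 / (2 * a)) : ℂ) = ((1 / (2 * a) : ℝ) : ℂ) * (-I) := by push_cast; ring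
    rw [this, cpow_half_pos_mul _ (by positivity) _ (by simp), one_div, mul_inv]
    congr 1
    rw [cpow_def_of_ne_zero (by simp), log_neg_I, ← Complex.exp_neg]
    congr 1
    ring
  rw [h6] at h4
  refine ⟨N * ((Real.sqrt (1 / (2 * a)))⁻¹ * (1 / (2 * a))), by positivity, ?_⟩
  push_cast at h4 ⊢
  field_simp at h4 ⊢
  linear_combination h4
set_option linter.unusedSectionVars false

lemma sum_hom_range {A B : Type*} [AddCommGroup A] [AddCommGroup B] [Fintype A] [Fintype B]
    (φ : A →+ B) (f : B → ℂ) : ∃ c : ℝ, 0 < c ∧ ∑ a, f (φ a) =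
      c * ∑ b, (open Classical in if b ∈ Set.range φ then f b else 0) := by
  classical
  refine ⟨(Finset.univ.filter fun a => φ a = 0).card, ?_, ?_⟩
  · exact_mod_cast Finset.card_pos.2 ⟨0, by simp⟩
  · rw [← Finset.sum_fiberwise Finset.univ φ, Finset.mul_sum]
    refine Finset.sum_congr rfl fun b _ => ?_
    split_ifs with hb
    · rw [AddMonoidHom.card_fiber_eq_of_mem_range φ (⟨0, map_zero φ⟩ : (0 : B) ∈ Set.range φ) hb]
      rw [Finset.sum_congr rfl (g := fun _ => f b)
        (fun a ha => by rw [(Finset.mem_filter.1 ha).2])]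
      simp
    · rw [Finset.sum_eq_zero, mul_zero]
      intro a ha
      exact absurd ⟨a, (Finset.mem_filter.1 ha).2⟩ hb

lemma sum_hom_surj {A B : Type*} [AddCommGroup A] [AddCommGroup B] [Fintype A] [Fintype B]
    (φ : A →+ B) (hφ : Function.Surjective φ) (f : B → ℂ) :
    ∃ c : ℝ, 0 < c ∧ ∑ a, f (φ a) = c * ∑ b, f b := by
  obtain ⟨c, hc, h⟩ := sum_hom_range φ f
  refine ⟨c, hc, h.trans ?_⟩
  congr 1
  refine Finset.sum_congr rfl fun b _ => ?_
  exact if_pos (hφ b)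

lemma char_orth {ι : Type*} [Fintype ι] [DecidableEq ι] (N : ℕ) [NeZero N] (z : ι → ZMod N) :
    ∑ l : ι → ZMod N, ZMod.stdAddChar (z ⬝ᵥ l) =
      (open Classical in if z = 0 then (Fintype.card (ι → ZMod N) : ℂ) else 0) := by
  classical
  let χ : AddChar (ι → ZMod N) ℂ :=
    { toFun := fun l => ZMod.stdAddChar (z ⬝ᵥ l)
      map_zero_eq_one' := by simp
      map_add_eq_mul' := fun a b => by rw [dotProduct_add, AddChar.map_add_eq_mul] }
  have h := AddChar.sum_eq_ite χ
  have h0 : χ = 0 ↔ z = 0 := by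
    constructor
    · intro hχ
      ext i
      have h1 : χ (Pi.single i 1) = 1 := by rw [hχ]; simp
      have h2 : ZMod.stdAddChar (z i) = 1 := by
        have : χ (Pi.single i 1) = ZMod.stdAddChar (z ⬝ᵥ Pi.single i 1) := rfl
        rw [this, dotProduct_single, mul_one] at h1
        exact h1
      rw [← (ZMod.stdAddChar (N := N)).map_zero_eq_one] at h2
      exact ZMod.injective_stdAddChar h2
    · intro hz
      ext l
      change ZMod.stdAddChar (z ⬝ᵥ l) = 1
      simp [hz]
  simp only [h0] at h
  exact h

/-- Reduction of an integer vector mod `N`. -/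
def redv {ι : Type*} (N : ℕ) (x : ι → ℤ) : ι → ZMod N := fun i => (x i : ZMod N)
/-- Reduction of an integer matrix mod `N`. -/
def redm {ι : Type*} (N : ℕ) (x : Matrix ι ι ℤ) : Matrix ι ι (ZMod N) := x.map (Int.castRingHom (ZMod N))

section red
variable {ι : Type*} [Fintype ι] [DecidableEq ι] (N : ℕ)

lemma redv_surj (u : ι → ZMod N) : ∃ x, redv N x = u := by
  choose g hg using ZMod.intCast_surjective (n := N)
  exact ⟨fun i => g (u i), by ext i; simp [redv, hg]⟩
lemma redv_mulVec (A : Matrix ι ι ℤ) (x : ι → ℤ) : redm N A *ᵥ redv N x = redv N (A *ᵥ x) := by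
  ext i; simp [redm, redv, mulVec, dotProduct]
lemma redv_dot (x y : ι → ℤ) : redv N x ⬝ᵥ redv N y = ((x ⬝ᵥ y : ℤ) : ZMod N) := by
  simp [redv, dotProduct]
lemma redv_add (x y : ι → ℤ) : redv N (x + y) = redv N x + redv N y := by
  ext; simp [redv]
lemma redv_eq_zero (x : ι → ℤ) (h : redv N x = 0) : ∃ z : ι → ℤ, x = (N : ℤ) • z := by
  have : ∀ i, ∃ z, x i = N * z := fun i =>
    (ZMod.intCast_zmod_eq_zero_iff_dvd (x i) N).1 (congrFun h i)
  choose z hz using this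
  exact ⟨z, by ext i; simp [hz]⟩
end red

section milgram
variable {ι : Type*} [Fintype ι] [DecidableEq ι] (N : ℕ) [NeZero N] (G P : Matrix ι ι ℤ)
  (E d : ι → ℤ)

lemma RP_eq (hD : Pᵀ * G * P = diagonal d) (hE : ∀ i, 2 * E i * d i = N) :
    ((2 : ℤ) • (diagonal E * Pᵀ * G)) * P = (N : ℤ) • 1 := by
  rw [smul_mul_assoc, mul_assoc, mul_assoc, ← mul_assoc Pᵀ, hD, diagonal_mul_diagonal]
  ext i j
  by_cases h : i = j
  · subst h; simp [← hE i]; ring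
  · simp [h]

lemma PR_eq (hP : P.det ≠ 0) (hD : Pᵀ * G * P = diagonal d) (hE : ∀ i, 2 * E i * d i = N) :
    P * ((2 : ℤ) • (diagonal E * Pᵀ * G)) = (N : ℤ) • 1 := by
  have h := RP_eq N G P E d hD hE
  set R := ((2 : ℤ) • (diagonal E * Pᵀ * G))
  have h1 : (P * R - (N : ℤ) • 1) * P = 0 := by
    rw [sub_mul, mul_assoc, h, mul_smul_comm, smul_mul_assoc, mul_one, one_mul, sub_self]
  have h2 : (P * R - (N : ℤ) • 1) * P * P.adjugate = 0 := by rw [h1, zero_mul]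
  rw [mul_assoc, mul_adjugate, mul_smul_comm, mul_one] at h2
  have h3 := (smul_eq_zero.1 h2).resolve_left hP
  exact sub_eq_zero.1 h3

lemma even_vanish (hG : G.IsSymm) (he : EvenGram G) (hP : P.det ≠ 0)
    (hD : Pᵀ * G * P = diagonal d) (hE : ∀ i, 2 * E i * d i = N) (l : ι → ℤ) :
    ∃ j, (G *ᵥ l) ⬝ᵥ (P * diagonal E * Pᵀ) *ᵥ (G *ᵥ l) = N * j := by
  obtain ⟨j, hj⟩ := he l
  refine ⟨j, ?_⟩
  have h1 : (2 : ℤ) • ((P * diagonal E * Pᵀ) *ᵥ (G *ᵥ l)) = (N : ℤ) • l := by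
    have := congrArg (fun M => M *ᵥ l) (PR_eq N G P E d hP hD hE)
    simp only [smul_mulVec, one_mulVec] at this
    rw [← this, mulVec_mulVec, ← smul_mulVec]
    simp only [mul_smul_comm, mul_assoc]
  have h2 : 2 * ((G *ᵥ l) ⬝ᵥ (P * diagonal E * Pᵀ) *ᵥ (G *ᵥ l)) = 2 * (N * j) := by
    rw [← smul_eq_mul, ← dotProduct_smul, h1, dotProduct_smul, dotProduct_comm]
    rw [BF] at hj
    rw [hj, smul_eq_mul]; ring
  linarith

lemma quad_expand {R : Type*} [CommRing R] (A : Matrix ι ι R) (hA : A.IsSymm) (x y : ι → R) :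
    (x + y) ⬝ᵥ A *ᵥ (x + y) = x ⬝ᵥ A *ᵥ x + 2 * (x ⬝ᵥ A *ᵥ y) + y ⬝ᵥ A *ᵥ y := by
  have : y ⬝ᵥ A *ᵥ x = x ⬝ᵥ A *ᵥ y := by
    rw [dotProduct_mulVec, ← mulVec_transpose, hA, dotProduct_comm]
  rw [mulVec_add, dotProduct_add, add_dotProduct, add_dotProduct, this]; ring

lemma dot_conj {R : Type*} [CommRing R] (A B : Matrix ι ι R) (x y : ι → R) :
    (Bᵀ *ᵥ x) ⬝ᵥ A *ᵥ (Bᵀ *ᵥ y) = x ⬝ᵥ (B * A * Bᵀ) *ᵥ y := by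
  rw [mulVec_transpose, ← dotProduct_mulVec]
  simp [mulVec_mulVec, mul_assoc, ← mulVec_transpose]

lemma milgram1 (hG : G.IsSymm) (he : EvenGram G) (hP : P.det ≠ 0)
    (hD : Pᵀ * G * P = diagonal d) (hE : ∀ i, 2 * E i * d i = N) :
    ∃ c : ℝ, 0 < c ∧ ∑ v : ι → ZMod N,
      ZMod.stdAddChar (v ⬝ᵥ redm N (P * diagonal E * Pᵀ) *ᵥ v) =
      c * ∑ u : ι → ZMod N, ZMod.stdAddChar (u ⬝ᵥ redm N (diagonal E) *ᵥ u) := by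
  classical
  have hPR := PR_eq N G P E d hP hD hE
  have hRP := RP_eq N G P E d hD hE
  set R := ((2 : ℤ) • (diagonal E * Pᵀ * G)) with hR
  have hshift : ∀ u l : ι → ZMod N,
      (u + redm N (Pᵀ * G) *ᵥ l) ⬝ᵥ redm N (diagonal E) *ᵥ (u + redm N (Pᵀ * G) *ᵥ l)
      = u ⬝ᵥ redm N (diagonal E) *ᵥ u + (redm N Rᵀ *ᵥ u) ⬝ᵥ l := by
    intro u l
    obtain ⟨u, rfl⟩ := redv_surj N u
    obtain ⟨l, rfl⟩ := redv_surj N l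
    simp only [redv_mulVec, ← redv_add, redv_dot]
    rw [quad_expand _ (by simp [IsSymm, diagonal_transpose])]
    obtain ⟨j, hj⟩ := even_vanish N G P E d hG he hP hD hE l
    rw [← dot_conj, mulVec_mulVec] at hj
    rw [hj, mulVec_transpose, ← dotProduct_mulVec, hR]
    simp only [mul_assoc, smul_mulVec, dotProduct_smul, mulVec_mulVec, smul_eq_mul]
    push_cast
    simp
  have hker : ∀ u : ι → ZMod N, redm N Rᵀ *ᵥ u = 0 ↔
      u ∈ Set.range (AddMonoidHom.mk' (fun v => redm N Pᵀ *ᵥ v) (fun a b => mulVec_add _ a b)) := by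
    intro u
    constructor
    · intro hu
      obtain ⟨u, rfl⟩ := redv_surj N u
      rw [redv_mulVec] at hu
      obtain ⟨z, hz⟩ := redv_eq_zero N _ hu
      refine ⟨redv N z, ?_⟩
      have h1 : (N : ℤ) • u = (N : ℤ) • (Pᵀ *ᵥ z) := by
        rw [← mulVec_smul, ← hz, mulVec_mulVec, ← transpose_mul, hRP]
        simp [smul_mulVec]
      have h2 : u = Pᵀ *ᵥ z := smul_right_injective _ (by exact_mod_cast NeZero.ne N) h1
      simp [redv_mulVec, ← h2]
    · rintro ⟨v, rfl⟩
      obtain ⟨v, rfl⟩ := redv_surj N v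
      simp only [AddMonoidHom.mk'_apply, redv_mulVec]
      rw [mulVec_mulVec, ← transpose_mul, hPR]
      ext i; simp [redv, smul_mulVec]
  obtain ⟨c, hc, h⟩ := sum_hom_range
    (AddMonoidHom.mk' (fun v : ι → ZMod N => redm N Pᵀ *ᵥ v) (fun a b => mulVec_add _ a b))
    (fun u => ZMod.stdAddChar (u ⬝ᵥ redm N (diagonal E) *ᵥ u))
  refine ⟨c, hc, ?_⟩
  have hL : ∀ v : ι → ZMod N, v ⬝ᵥ redm N (P * diagonal E * Pᵀ) *ᵥ v =
     (redm N Pᵀ *ᵥ v) ⬝ᵥ redm N (diagonal E) *ᵥ (redm N Pᵀ *ᵥ v) := by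
    intro v
    obtain ⟨v, rfl⟩ := redv_surj N v
    simp only [redv_mulVec, redv_dot, dot_conj]
  simp only [hL]
  refine h.trans ?_
  congr 1
  have hcard : (Fintype.card (ι → ZMod N) : ℂ) ≠ 0 := by
    exact_mod_cast Fintype.card_ne_zero
  apply mul_left_cancel₀ hcard
  symm
  calc (Fintype.card (ι → ZMod N) : ℂ) * ∑ u : ι → ZMod N, ZMod.stdAddChar (u ⬝ᵥ redm N (diagonal E) *ᵥ u)
      = ∑ l : ι → ZMod N, ∑ u : ι → ZMod N, ZMod.stdAddChar (u ⬝ᵥ redm N (diagonal E) *ᵥ u) := by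
        simp
    _ = ∑ l : ι → ZMod N, ∑ u : ι → ZMod N, ZMod.stdAddChar
        (u ⬝ᵥ redm N (diagonal E) *ᵥ u + (redm N Rᵀ *ᵥ u) ⬝ᵥ l) := by
        refine Finset.sum_congr rfl fun l _ => ?_
        rw [← Equiv.sum_comp (Equiv.addRight (redm N (Pᵀ * G) *ᵥ l))]
        simp only [Equiv.coe_addRight, hshift]
    _ = ∑ u : ι → ZMod N, ∑ l : ι → ZMod N, ZMod.stdAddChar
        (u ⬝ᵥ redm N (diagonal E) *ᵥ u) * ZMod.stdAddChar ((redm N Rᵀ *ᵥ u) ⬝ᵥ l) := by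
        rw [Finset.sum_comm]
        simp only [AddChar.map_add_eq_mul]
    _ = _ := by
        rw [Finset.mul_sum]
        refine Finset.sum_congr rfl fun u _ => ?_
        rw [← Finset.mul_sum, char_orth]
        simp only [hker u]
        split_ifs <;> ring

lemma milgram2 (hG : G.IsSymm) (he : EvenGram G) (hP : P.det ≠ 0)
    (hD : Pᵀ * G * P = diagonal d) (hE : ∀ i, 2 * E i * d i = N) (h13 : 13 ∣ N)
    (w y : ι → ℤ) (m : ℤ) (hw : ∀ x, ∃ k : ℤ, ∃ l, x = k • w + G *ᵥ l)
    (hy : G *ᵥ y = (13 : ℤ) • w) (hm : w ⬝ᵥ y = 2 * m) :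
    ∃ c : ℝ, 0 < c ∧ ∑ k : ZMod 13, ZMod.stdAddChar ((m : ZMod 13) * k ^ 2) =
      c * ∑ v : ι → ZMod N, ZMod.stdAddChar (v ⬝ᵥ redm N (P * diagonal E * Pᵀ) *ᵥ v) := by
  classical
  obtain ⟨N', hN'⟩ := h13
  have hN0 : (N : ℤ) ≠ 0 := by exact_mod_cast NeZero.ne N
  have hPR := PR_eq N G P E d hP hD hE
  have hEG : ∀ x, (2 : ℤ) • ((P * diagonal E * Pᵀ) *ᵥ (G *ᵥ x)) = (N : ℤ) • x := by
    intro x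
    have := congrArg (fun M => M *ᵥ x) hPR
    simp only [smul_mulVec, one_mulVec] at this
    rw [← this, mulVec_mulVec, ← smul_mulVec]
    simp only [mul_smul_comm, mul_assoc]
  set A := P * diagonal E * Pᵀ with hA
  have hAs : A.IsSymm := by
    simp [hA, IsSymm, transpose_mul, mul_assoc, diagonal_transpose]
  have hs : w ⬝ᵥ A *ᵥ w = N' * m := by
    have h1 : 13 * 2 * (w ⬝ᵥ A *ᵥ w) = 13 * 2 * (N' * m) := by
      have h2 := congrArg (fun z => w ⬝ᵥ z) (hEG y)
      simp only [hy, mulVec_smul, dotProduct_smul, smul_eq_mul, hm] at h2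
      rw [hN'] at h2
      push_cast at h2
      linarith
    linarith
  let Φ : ZMod N × (ι → ZMod N) →+ (ι → ZMod N) :=
    AddMonoidHom.mk' (fun p => p.1 • redv N w + redm N G *ᵥ p.2) (by
      intro p q
      simp only [Prod.fst_add, Prod.snd_add, mulVec_add, add_smul]
      abel)
  have hΦ : Function.Surjective Φ := by
    intro x
    obtain ⟨x, rfl⟩ := redv_surj N x
    obtain ⟨k, l, rfl⟩ := hw x
    refine ⟨((k : ZMod N), redv N l), ?_⟩
    simp only [Φ, AddMonoidHom.mk'_apply, redv_mulVec, redv_add]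
    congr 1
    ext i; simp [redv]
  have hval : ∀ p, Φ p ⬝ᵥ redm N A *ᵥ Φ p = (N' * m : ℤ) * p.1 ^ 2 := by
    rintro ⟨k, l⟩
    obtain ⟨k, rfl⟩ := ZMod.intCast_surjective k
    obtain ⟨l, rfl⟩ := redv_surj N l
    have : Φ ((k : ZMod N), redv N l) = redv N (k • w + G *ᵥ l) := by
      simp only [Φ, AddMonoidHom.mk'_apply, redv_mulVec, redv_add]
      congr 1
      ext i; simp [redv]
    rw [this, redv_mulVec, redv_dot, quad_expand _ hAs]
    obtain ⟨j, hj⟩ := even_vanish N G P E d hG he hP hD hE l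
    rw [hj, ← smul_eq_mul (2 : ℤ), ← dotProduct_smul, hEG]
    simp only [mulVec_smul, dotProduct_smul, smul_dotProduct, hs]
    push_cast
    simp
    ring
  obtain ⟨c, hc, h⟩ := sum_hom_surj Φ hΦ (fun v => ZMod.stdAddChar (v ⬝ᵥ redm N A *ᵥ v))
  simp only [hval] at h
  rw [Fintype.sum_prod_type] at h
  simp only [Finset.sum_const, Finset.card_univ, nsmul_eq_mul] at h
  rw [← Finset.mul_sum] at h
  have hd : 13 ∣ N := ⟨N', hN'⟩
  obtain ⟨c2, hc2, h2⟩ := sum_hom_surj (ZMod.castHom hd (ZMod 13)).toAddMonoidHom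
    (ZMod.castHom_surjective hd) (fun k => ZMod.stdAddChar ((m : ZMod 13) * k ^ 2))
  have h3 : ∀ k : ZMod N, ZMod.stdAddChar ((m : ZMod 13) * ((ZMod.castHom hd (ZMod 13)).toAddMonoidHom k) ^ 2)
      = ZMod.stdAddChar (((N' * m : ℤ) : ZMod N) * k ^ 2) := by
    intro k
    obtain ⟨k, rfl⟩ := ZMod.intCast_surjective k
    have e1 : (m : ZMod 13) * ((ZMod.castHom hd (ZMod 13)).toAddMonoidHom (k : ZMod N)) ^ 2 = ((m * k ^ 2 : ℤ) : ZMod 13) := by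
      simp
    have e2 : ((N' * m : ℤ) : ZMod N) * (k : ZMod N) ^ 2 = ((N' * m * k ^ 2 : ℤ) : ZMod N) := by
      push_cast; ring
    rw [e1, e2, ZMod.stdAddChar_coe, ZMod.stdAddChar_coe]
    congr 1
    have hN'0 : (N' : ℂ) ≠ 0 := by
      have : N' ≠ 0 := by rintro rfl; exact NeZero.ne N (by simpa using hN')
      exact_mod_cast this
    have : (N : ℂ) = 13 * N' := by rw [hN']; push_cast; rfl
    rw [this]
    push_cast
    field_simp
  simp only [h3] at h2
  have hcard : 0 < (Fintype.card (ι → ZMod N) : ℝ) := by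
    exact_mod_cast Fintype.card_pos
  refine ⟨c2⁻¹ * (Fintype.card (ι → ZMod N) : ℝ)⁻¹ * c, by positivity, ?_⟩
  have hc2' : (c2 : ℂ) ≠ 0 := by exact_mod_cast hc2.ne'
  have hcard' : ((Fintype.card (ι → ZMod N)) : ℂ) ≠ 0 := by exact_mod_cast Fintype.card_ne_zero
  rw [h2] at h
  push_cast at h ⊢
  rw [mul_assoc, ← h]
  field_simp

end milgram

lemma gauss_sign (N : ℕ) [NeZero N] (E d : ℤ) (hd : 2 ∣ d) (h : 2 * E * d = N) :
    ∃ r : ℝ, 0 < r ∧ ∑ t : ZMod N, ZMod.stdAddChar ((E : ZMod N) * t ^ 2) =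
      r * Complex.exp (((if 0 < d then 1 else -1 : ℤ) : ℂ) * (Real.pi / 4 * Complex.I)) := by
  have hN0 : (N : ℤ) ≠ 0 := by exact_mod_cast NeZero.ne N
  obtain ⟨b, rfl⟩ := hd
  have hb : b ≠ 0 := by rintro rfl; simp at h; exact hN0 h.symm
  rcases lt_or_gt_of_ne hb with hneg | hpos
  · obtain ⟨a, rfl⟩ : ∃ a : ℕ, b = -a := ⟨b.natAbs, by omega⟩
    obtain ⟨r, hr, hs⟩ := gauss_pos a N (-E) (by omega) (by rw [← h]; ring)
    refine ⟨r, hr, ?_⟩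
    have h1 : ∑ t : ZMod N, ZMod.stdAddChar ((E : ZMod N) * t ^ 2) =
        (starRingEnd ℂ) (∑ t : ZMod N, ZMod.stdAddChar (((-E : ℤ) : ZMod N) * t ^ 2)) := by
      rw [map_sum]
      refine Finset.sum_congr rfl fun t _ => ?_
      rw [← AddChar.map_neg_eq_conj]
      congr 1
      push_cast; ring
    rw [h1, hs, if_neg (by omega), map_mul, Complex.conj_ofReal, ← Complex.exp_conj]
    congr 2
    have h4 : (starRingEnd ℂ) (4 : ℂ) = 4 := map_ofNat (starRingEnd ℂ) 4
    simp [h4]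
  · obtain ⟨a, rfl⟩ : ∃ a : ℕ, b = a := ⟨b.natAbs, by omega⟩
    obtain ⟨r, hr, hs⟩ := gauss_pos a N E (by omega) (by rw [← h]; ring)
    refine ⟨r, hr, ?_⟩
    rw [hs, if_pos (by omega)]
    simp

lemma gauss_prod {ι : Type*} [Fintype ι] [DecidableEq ι] (N : ℕ) [NeZero N] (E d : ι → ℤ)
    (hd : ∀ i, 2 ∣ d i) (h : ∀ i, 2 * E i * d i = N)
    (hsig : ∑ i, (if 0 < d i then 1 else -1 : ℤ) = -8) :
    ∃ r : ℝ, 0 < r ∧ ∑ u : ι → ZMod N, ZMod.stdAddChar (u ⬝ᵥ redm N (diagonal E) *ᵥ u) = r := by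
  choose r hr hs using fun i => gauss_sign N (E i) (d i) (hd i) (h i)
  refine ⟨∏ i, r i, Finset.prod_pos fun i _ => hr i, ?_⟩
  have h1 : ∀ u : ι → ZMod N, ZMod.stdAddChar (u ⬝ᵥ redm N (diagonal E) *ᵥ u) =
      ∏ i, ZMod.stdAddChar ((E i : ZMod N) * u i ^ 2) := by
    intro u
    have hsum : ∀ (f : ι → ZMod N), ∏ i, (ZMod.stdAddChar (f i) : ℂ) =
        ZMod.stdAddChar (∑ i, f i) := by
      intro f
      induction (Finset.univ : Finset ι) using Finset.induction_on with
      | empty => simp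
      | insert a s ha ih =>
        rw [Finset.prod_insert ha, Finset.sum_insert ha, AddChar.map_add_eq_mul, ih]
    rw [hsum]
    congr 1
    refine Finset.sum_congr rfl fun i _ => ?_
    have : redm N (diagonal E) = diagonal (fun i => (E i : ZMod N)) := by
      ext i j
      by_cases hij : i = j
      · subst hij; simp [redm]
      · simp [redm, hij]
    rw [this, mulVec_diagonal]; ring
  simp only [h1]
  rw [← Fintype.prod_sum (fun i (t : ZMod N) => ZMod.stdAddChar ((E i : ZMod N) * t ^ 2))]
  simp only [hs, Finset.prod_mul_distrib]
  rw [← Complex.exp_sum, ← Finset.sum_mul, ← Int.cast_sum, hsig]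
  have : (((-8 : ℤ) : ℂ) * (Real.pi / 4 * Complex.I)) = -(2 * Real.pi * Complex.I) := by
    push_cast; ring
  rw [this, Complex.exp_neg, Complex.exp_two_pi_mul_I]
  simp

lemma sylv {ι : Type*} [Fintype ι] [DecidableEq ι] (A P : Matrix ι ι ℝ) (w : ι → ℝ)
    (hP : IsUnit P.det) (h : Pᵀ * A * P = diagonal w) :
    (Matrix.toQuadraticForm' A).Equivalent (QuadraticMap.weightedSumSquares ℝ w) := by
  have : Invertible P := P.invertibleOfIsUnitDet hP
  refine QuadraticMap.Equivalent.symm ⟨⟨Matrix.toLinearEquiv' P this, ?_⟩⟩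
  intro x
  change Matrix.toQuadraticForm' A (P *ᵥ x) = _
  have h1 : Matrix.toQuadraticForm' A (P *ᵥ x) = (P *ᵥ x) ⬝ᵥ A *ᵥ (P *ᵥ x) := by
    exact Matrix.toLinearMap₂'_apply' A _ _
  rw [h1]
  have h2 := dot_conj A Pᵀ x x
  rw [transpose_transpose, h] at h2
  rw [h2, QuadraticMap.weightedSumSquares_apply]
  simp only [dotProduct, mulVec_diagonal, smul_eq_mul]
  refine Finset.sum_congr rfl fun i _ => ?_
  ring

lemma diag_exists (n : ℕ) (G : Matrix (Fin n) (Fin n) ℤ) (hG : G.IsSymm) :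
    ∃ (P : Matrix (Fin n) (Fin n) ℤ) (d : Fin n → ℤ), P.det ≠ 0 ∧ Pᵀ * G * P = diagonal d := by
  set Gq : Matrix (Fin n) (Fin n) ℚ := G.map (Int.cast : ℤ → ℚ) with hGq
  have hGqs : Gq.IsSymm := by
    ext i j; simp [hGq, hG.apply i j]
  have : Invertible (2 : ℚ) := invertibleOfNonzero two_ne_zero
  have hsym : (Matrix.toBilin' Gq).IsSymm := by
    refine ⟨fun x y => ?_⟩
    simp only [Matrix.toBilin'_apply']
    rw [dotProduct_mulVec, ← mulVec_transpose, hGqs, dotProduct_comm]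
  obtain ⟨v', hv'⟩ := LinearMap.BilinForm.exists_orthogonal_basis (LinearMap.BilinForm.isSymm_iff.1 hsym)
  have hfin : Module.finrank ℚ (Fin n → ℚ) = n := by simp
  let v := v'.reindex (finCongr hfin)
  have hv : ∀ i j, i ≠ j → v i ⬝ᵥ Gq *ᵥ v j = 0 := by
    intro i j hij
    have := hv' (i := (finCongr hfin).symm i) (j := (finCongr hfin).symm j) (by simpa using hij)
    have h2 : Matrix.toBilin' Gq (v i) (v j) = 0 := by
      simpa [v, Function.onFun] using this
    rwa [Matrix.toBilin'_apply'] at h2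
  obtain ⟨b, hb⟩ := IsLocalization.exist_integer_multiples_of_finite (nonZeroDivisors ℤ)
    (fun p : Fin n × Fin n => v p.1 p.2)
  have hb0 : ((b : ℤ) : ℚ) ≠ 0 := by
    exact_mod_cast nonZeroDivisors.ne_zero b.2
  choose z hz using hb
  have hz' : ∀ i j, ((z (i, j) : ℤ) : ℚ) = (b : ℤ) * v i j := by
    intro i j
    have := hz (i, j)
    simpa [zsmul_eq_mul] using this
  let P : Matrix (Fin n) (Fin n) ℤ := Matrix.of fun j i => z (i, j)
  have hPq : P.map (Int.cast : ℤ → ℚ) = ((b : ℤ) : ℚ) • (Matrix.of v)ᵀ := by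
    ext j i
    simp [P, hz']
  refine ⟨P, fun i => (Pᵀ * G * P) i i, ?_, ?_⟩
  · intro h0
    have h1 : (P.map (Int.cast : ℤ → ℚ)).det = 0 := by
      have := RingHom.map_det (Int.castRingHom ℚ) P
      rw [h0] at this
      simpa [RingHom.mapMatrix_apply] using this.symm
    rw [hPq, det_smul, det_transpose] at h1
    have h2 := (Pi.basisFun ℚ (Fin n)).isUnit_det v
    rw [Pi.basisFun_det_apply] at h2
    exact (mul_ne_zero (pow_ne_zero _ hb0) h2.ne_zero) h1
  · ext i j
    by_cases hij : i = j
    · subst hij; simp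
    · rw [diagonal_apply_ne _ hij]
      have h1 : (((Pᵀ * G * P) i j : ℤ) : ℚ) = ((b : ℤ) : ℚ) ^ 2 * (v i ⬝ᵥ Gq *ᵥ v j) := by
        simp only [mul_apply, dotProduct, mulVec, transpose_apply, Int.cast_sum, Int.cast_mul,
          Finset.mul_sum, Finset.sum_mul, P, of_apply, hz', Gq, map_apply]
        rw [Finset.sum_comm]
        refine Finset.sum_congr rfl fun k _ => Finset.sum_congr rfl fun l _ => ?_
        ring
      rw [hv i j hij, mul_zero] at h1
      exact_mod_cast h1

lemma sig_sum (G P : Matrix (Fin 10) (Fin 10) ℤ) (d : Fin 10 → ℤ) (hP : P.det ≠ 0)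
    (hD : Pᵀ * G * P = diagonal d) (hs : SigIs G 1 9) :
    ∑ i, (if 0 < d i then 1 else -1 : ℤ) = -8 := by
  obtain ⟨d', hd', h1, h9, P', hP', hD'⟩ := hs
  have e1 := sylv _ P' d' hP' hD'
  have e2 := sylv (G.map (Int.cast : ℤ → ℝ)) (P.map (Int.cast : ℤ → ℝ)) (fun i => (d i : ℝ)) (by
      have := RingHom.map_det (Int.castRingHom ℝ) P
      rw [RingHom.mapMatrix_apply] at this
      have h2 : (P.map (Int.cast : ℤ → ℝ)).det = (P.det : ℝ) := this.symm
      rw [h2, isUnit_iff_ne_zero]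
      exact_mod_cast hP) (by
      have := congrArg (fun M => M.map (Int.castRingHom ℝ)) hD
      simp only [Matrix.map_mul] at this
      rw [diagonal_map (by simp)] at this
      exact this)
  have h3 := (QuadraticForm.sigPos_of_equiv_weightedSumSquares e1).symm.trans
    (QuadraticForm.sigPos_of_equiv_weightedSumSquares e2)
  have h4 : {i | 0 < d' i}.ncard = 1 := by
    rw [← h1, ← Nat.card_coe_set_eq]
    refine Nat.card_congr (Equiv.subtypeEquivRight fun i => ?_)
    change 0 < d' i ↔ d' i = 1
    rcases hd' i with h | h <;> rw [h] <;> norm_num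
  rw [h4] at h3
  have h5 : (Finset.univ.filter fun i => 0 < d i).card = 1 := by
    rw [h3, ← Set.ncard_coe_finset]
    congr 1
    ext i; simp
  have h6 : ∀ i, (if 0 < d i then 1 else -1 : ℤ) = 2 * (if 0 < d i then 1 else 0) - 1 := by
    intro i; split_ifs <;> norm_num
  simp only [h6]
  rw [Finset.sum_sub_distrib, ← Finset.mul_sum, Finset.sum_boole, h5]
  simp

lemma card_coker {ι : Type*} [Fintype ι] [DecidableEq ι] (G : Matrix ι ι ℤ) (h : G.det ≠ 0) :
    Nat.card (Coker G) = G.det.natAbs := by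
  have hinj : Function.Injective (Matrix.toLin' G) := by
    rw [← LinearMap.ker_eq_bot, Matrix.ker_toLin'_eq_bot_iff]
    intro v hv
    exact Matrix.eq_zero_of_mulVec_eq_zero h hv
  have := Submodule.natAbs_det_equiv (LinearMap.range (Matrix.toLin' G))
    (LinearEquiv.ofInjective (Matrix.toLin' G) hinj)
  rw [← this, ← LinearMap.det_toLin' G]
  rfl

/-- Generator data for a discriminant group of order `13`. -/
def GenData {ι : Type*} [Fintype ι] (G : Matrix ι ι ℤ) (w y : ι → ℤ) (m : ℤ) : Prop :=
  (∀ x, ∃ k : ℤ, ∃ l, x = k • w + G *ᵥ l) ∧ G *ᵥ y = (13 : ℤ) • w ∧ w ⬝ᵥ y = 2 * m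

lemma main13 (G : Matrix (Fin 10) (Fin 10) ℤ) (hG : G.IsSymm) (he : EvenGram G)
    (hs : SigIs G 1 9) (hdet : G.det = -13) :
    ∃ w y m, GenData G w y m ∧ (m : ZMod 13) ≠ 0 ∧
      ∃ r : ℝ, 0 < r ∧ ∑ k : ZMod 13, ZMod.stdAddChar ((m : ZMod 13) * k ^ 2) = r := by
  have hcard : Nat.card (Coker G) = 13 := by rw [card_coker G (by rw [hdet]; norm_num), hdet]; rfl
  have : Fact (Nat.Prime 13) := ⟨by norm_num⟩
  have : IsAddCyclic (Coker G) := isAddCyclic_of_prime_card hcard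
  obtain ⟨g, hg⟩ := IsAddCyclic.exists_generator (α := Coker G)
  obtain ⟨w, rfl⟩ := Submodule.Quotient.mk_surjective _ g
  have hw : ∀ x, ∃ k : ℤ, ∃ l, x = k • w + G *ᵥ l := by
    intro x
    obtain ⟨k, hk⟩ := AddSubgroup.mem_zmultiples_iff.1 (hg (Submodule.Quotient.mk x))
    rw [← Submodule.Quotient.mk_smul, eq_comm, Submodule.Quotient.eq] at hk
    obtain ⟨l, hl⟩ := hk
    refine ⟨k, l, ?_⟩
    rw [Matrix.toLin'_apply] at hl
    rw [hl]; abel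
  set y := -(G.adjugate *ᵥ w) with hydef
  have hy : G *ᵥ y = (13 : ℤ) • w := by
    rw [hydef, mulVec_neg, mulVec_mulVec, mul_adjugate, hdet, smul_mulVec, one_mulVec]
    simp
  have hyGy : y ⬝ᵥ G *ᵥ y = 13 * (w ⬝ᵥ y) := by
    rw [hy, dotProduct_smul, dotProduct_comm, smul_eq_mul]
  obtain ⟨m, hm⟩ : 2 ∣ w ⬝ᵥ y := by
    have := he y
    rw [BF, hyGy] at this
    omega
  refine ⟨w, y, m, ⟨hw, hy, hm⟩, ?_, ?_⟩
  · intro h0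
    obtain ⟨m', hm'⟩ := (ZMod.intCast_zmod_eq_zero_iff_dvd m 13).1 h0
    have hdiv : ∀ x : Fin 10 → ℤ, (13 : ℤ) ∣ x ⬝ᵥ y := by
      intro x
      obtain ⟨k, l, rfl⟩ := hw x
      have : (G *ᵥ l) ⬝ᵥ y = 13 * (l ⬝ᵥ w) := by
        rw [← smul_eq_mul, ← dotProduct_smul, ← hy, dotProduct_mulVec, ← mulVec_transpose, hG]
      rw [add_dotProduct, smul_dotProduct, hm, hm', this]
      exact ⟨k * (2 * m') + l ⬝ᵥ w, by simp; ring⟩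
    have hz : ∀ i, ∃ z, y i = 13 * z := fun i => by
      have := hdiv (Pi.single i 1)
      rwa [single_dotProduct, one_mul] at this
    choose z hz using hz
    have hyz : y = (13 : ℤ) • z := by ext i; simp [hz]
    have hwz : w = G *ᵥ z := by
      rw [hyz, mulVec_smul] at hy
      exact (smul_right_injective _ (by norm_num : (13 : ℤ) ≠ 0) hy).symm
    have htriv : ∀ q : Coker G, q = 0 := by
      intro q
      obtain ⟨k, hk⟩ := AddSubgroup.mem_zmultiples_iff.1 (hg q)
      rw [← hk]
      have : (Submodule.Quotient.mk w : Coker G) = 0 := by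
        rw [Submodule.Quotient.mk_eq_zero]
        exact ⟨z, by rw [Matrix.toLin'_apply, ← hwz]⟩
      rw [this, smul_zero]
    have : Subsingleton (Coker G) := ⟨fun a b => (htriv a).trans (htriv b).symm⟩
    rw [Nat.card_of_subsingleton (0 : Coker G)] at hcard
    norm_num at hcard
  · obtain ⟨P, d, hP, hD⟩ := diag_exists 10 G hG
    have hprod : ∏ i, d i ≠ 0 := by
      rw [← det_diagonal, ← hD, det_mul, det_mul, det_transpose, hdet]
      exact mul_ne_zero (mul_ne_zero hP (by norm_num)) hP
    have heven : ∀ i, 2 ∣ d i := by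
      intro i
      have h1 := he (P *ᵥ Pi.single i 1)
      have h2 := dot_conj G Pᵀ (Pi.single i 1) (Pi.single i 1)
      rw [transpose_transpose, hD] at h2
      rw [BF, h2] at h1
      simpa using h1
    have hdvd : ∀ i, ∃ e, |∏ i, d i| = d i * e := fun i =>
      (dvd_abs _ _).2 (Finset.dvd_prod_of_mem d (Finset.mem_univ i))
    choose e he' using hdvd
    set N : ℕ := 26 * (∏ i, d i).natAbs with hN
    have hN0 : NeZero N := ⟨by
      have := Int.natAbs_ne_zero.2 hprod
      omega⟩
    have hE : ∀ i, 2 * (13 * e i) * d i = N := by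
      intro i
      rw [hN]; push_cast
      rw [he' i]; ring
    obtain ⟨r, hr, h1⟩ := gauss_prod N (fun i => 13 * e i) d heven hE (sig_sum G P d hP hD hs)
    obtain ⟨c, hc, h2⟩ := milgram1 N G P _ d hG he hP hD hE
    obtain ⟨c', hc', h3⟩ := milgram2 N G P _ d hG he hP hD hE
      ⟨2 * (∏ i, d i).natAbs, by rw [hN]; ring⟩ w y m hw hy hm
    refine ⟨c' * (c * r), by positivity, ?_⟩
    rw [h3, h2, h1]
    push_cast; rfl

/-- Quadratic Gauss sum modulo `13`. -/
noncomputable def S13 (m : ZMod 13) : ℂ := ∑ k : ZMod 13, ZMod.stdAddChar (m * k ^ 2)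

lemma S13_sq (m c : ZMod 13) (hc : c ≠ 0) : S13 (m * c ^ 2) = S13 m := by
  have : Fact (Nat.Prime 13) := ⟨by norm_num⟩
  unfold S13
  rw [← Equiv.sum_comp (Equiv.mulLeft₀ c hc) (fun k => ZMod.stdAddChar (m * k ^ 2))]
  refine Finset.sum_congr rfl fun k _ => ?_
  simp only [Equiv.mulLeft₀_apply]
  congr 1; ring

lemma S13_add : S13 1 + S13 2 = 0 := by
  have h : (Finset.univ : Finset (ZMod 13)).val.map (fun k => (1 : ZMod 13) * k ^ 2) +
      (Finset.univ : Finset (ZMod 13)).val.map (fun k => (2 : ZMod 13) * k ^ 2) =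
      (Finset.univ : Finset (ZMod 13)).val + (Finset.univ : Finset (ZMod 13)).val := by decide
  have h1 := congrArg (fun s => (s.map (fun x => (ZMod.stdAddChar x : ℂ))).sum) h
  simp only [Multiset.map_add, Multiset.sum_add, Multiset.map_map] at h1
  have h2 : ∑ x : ZMod 13, (ZMod.stdAddChar x : ℂ) = 0 := by
    have := (AddChar.sum_eq_zero_iff_ne_zero (ψ := (ZMod.stdAddChar : AddChar (ZMod 13) ℂ))).2 (by
      intro h0
      have : (ZMod.stdAddChar (1 : ZMod 13) : ℂ) = 1 := by rw [h0]; simp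
      rw [← (ZMod.stdAddChar (N := 13)).map_zero_eq_one] at this
      exact absurd (ZMod.injective_stdAddChar this) (by decide))
    exact this
  change S13 1 + S13 2 = ∑ x : ZMod 13, (ZMod.stdAddChar x : ℂ) + ∑ x : ZMod 13, (ZMod.stdAddChar x : ℂ) at h1
  rw [h1, h2, add_zero]

lemma class13 (m m' : ZMod 13) (hm : m ≠ 0) (hm' : m' ≠ 0) (r r' : ℝ) (hr : 0 < r) (hr' : 0 < r')
    (h : S13 m = r) (h' : S13 m' = r') : ∃ t : ZMod 13, t ≠ 0 ∧ m + m' * t ^ 2 = 0 := by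
  have hc : ∀ m : ZMod 13, m ≠ 0 → ∃ c, c ≠ 0 ∧ (m = 1 * c ^ 2 ∨ m = 2 * c ^ 2) := by decide
  have hsq : ∀ a : ZMod 13, ∀ c, c ≠ 0 → ∀ c', c' ≠ 0 → ∃ t : ZMod 13, t ≠ 0 ∧ a * c ^ 2 + a * c' ^ 2 * t ^ 2 = 0 := by
    have h5 : ∀ c : ZMod 13, c ≠ 0 → ∀ c', c' ≠ 0 → ∃ t : ZMod 13, t ≠ 0 ∧ c ^ 2 + c' ^ 2 * t ^ 2 = 0 := by decide
    intro a c h1 c' h2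
    obtain ⟨t, ht, h⟩ := h5 c h1 c' h2
    exact ⟨t, ht, by linear_combination a * h⟩
  have habs : ¬ ((r : ℂ) + r' = 0) := by
    intro h0
    have : r + r' = 0 := by exact_mod_cast h0
    linarith
  obtain ⟨c, hc0, hcm⟩ := hc m hm
  obtain ⟨c', hc0', hcm'⟩ := hc m' hm'
  rcases hcm with rfl | rfl <;> rcases hcm' with rfl | rfl
  · exact hsq _ _ hc0 _ hc0'
  · rw [S13_sq _ _ hc0] at h
    rw [S13_sq _ _ hc0'] at h'
    exact absurd (by rw [← h, ← h', S13_add]) habs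
  · rw [S13_sq _ _ hc0] at h
    rw [S13_sq _ _ hc0'] at h'
    exact absurd (by rw [← h, ← h', add_comm, S13_add]) habs
  · exact hsq _ _ hc0 _ hc0'

section fin13
variable {ι κ : Type*} [Fintype ι] [DecidableEq ι] [Fintype κ] [DecidableEq κ]

/-- Cast of an integral vector to a rational one. -/
def toQ (x : ι → ℤ) : ι → ℚ := fun i => (x i : ℚ)

lemma toQ_dot (x y : ι → ℤ) : toQ x ⬝ᵥ toQ y = ((x ⬝ᵥ y : ℤ) : ℚ) := by
  simp [toQ, dotProduct]

lemma toQ_mulVec (G : Matrix ι ι ℤ) (x : ι → ℤ) :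
    G.map (Int.cast : ℤ → ℚ) *ᵥ toQ x = toQ (G *ᵥ x) := by
  ext i; simp [toQ, mulVec, dotProduct]

lemma qinv (G : Matrix ι ι ℤ) (hdet : G.det ≠ 0) (l : ι → ℤ) :
    (G.map (Int.cast : ℤ → ℚ))⁻¹ *ᵥ toQ (G *ᵥ l) = toQ l := by
  have h2 : (G.map (Int.cast : ℤ → ℚ)).det = (G.det : ℚ) :=
    (RingHom.map_det (Int.castRingHom ℚ) G).symm
  rw [← toQ_mulVec, mulVec_mulVec, nonsing_inv_mul, one_mulVec]
  rw [h2, isUnit_iff_ne_zero]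
  exact_mod_cast hdet

lemma qval_gen (G : Matrix ι ι ℤ) (hG : G.IsSymm) (hdet : G.det ≠ 0) (w y : ι → ℤ) (m : ℤ)
    (hy : G *ᵥ y = (13 : ℤ) • w) (hm : w ⬝ᵥ y = 2 * m) (k : ℤ) (l : ι → ℤ) :
    qval G (k • w + G *ᵥ l) =
      k ^ 2 * (2 * m / 13) + 2 * (k * ((w ⬝ᵥ l : ℤ) : ℚ)) + ((BF G l l : ℤ) : ℚ) := by
  have hs : ((G.map (Int.cast : ℤ → ℚ))⁻¹).IsSymm := by
    unfold Matrix.IsSymm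
    rw [transpose_nonsing_inv]
    congr 1
    ext i j; simp [hG.apply i j]
  have e1 : toQ (k • w + G *ᵥ l) = (k : ℚ) • toQ w + toQ (G *ᵥ l) := by
    ext i; simp [toQ]
  have e2 : (G.map (Int.cast : ℤ → ℚ))⁻¹ *ᵥ toQ w = (1 / 13 : ℚ) • toQ y := by
    have h1 : toQ w = (1 / 13 : ℚ) • toQ (G *ᵥ y) := by
      rw [hy]; ext i; simp [toQ]
    rw [h1, mulVec_smul, qinv G hdet]
  change toQ (k • w + G *ᵥ l) ⬝ᵥ (G.map (Int.cast : ℤ → ℚ))⁻¹ *ᵥ toQ (k • w + G *ᵥ l) = _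
  rw [e1, quad_expand _ hs, qinv G hdet, mulVec_smul, e2]
  have e3 : toQ (G *ᵥ l) ⬝ᵥ toQ l = ((BF G l l : ℤ) : ℚ) := by
    rw [toQ_dot, dotProduct_comm]; rfl
  rw [e3]
  simp only [smul_dotProduct, dotProduct_smul, toQ_dot, hm, smul_eq_mul]
  push_cast
  ring

lemma coker_equiv (G : Matrix ι ι ℤ) (hc : Nat.card (Coker G) = 13) (w y : ι → ℤ) (m : ℤ)
    (h : GenData G w y m) :
    ∃ e : ZMod 13 ≃+ Coker G, ∀ k : ℤ, e (k : ZMod 13) = Submodule.Quotient.mk (k • w) := by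
  obtain ⟨hw, hy, -⟩ := h
  let f : ZMod 13 →+ Coker G := ZMod.lift 13 ⟨zmultiplesHom (Coker G) (Submodule.Quotient.mk w), by
    rw [zmultiplesHom_apply, ← Submodule.Quotient.mk_smul, Submodule.Quotient.mk_eq_zero]
    exact ⟨y, by rw [Matrix.toLin'_apply, hy]; rfl⟩⟩
  have hf : ∀ k : ℤ, f (k : ZMod 13) = Submodule.Quotient.mk (k • w) := by
    intro k
    simp only [f]
    rw [ZMod.lift_coe]
    rfl
  have hsurj : Function.Surjective f := by
    intro q
    obtain ⟨x, rfl⟩ := Submodule.Quotient.mk_surjective _ q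
    obtain ⟨k, l, rfl⟩ := hw x
    refine ⟨(k : ZMod 13), ?_⟩
    rw [hf, Submodule.Quotient.eq]
    exact ⟨-l, by rw [Matrix.toLin'_apply, mulVec_neg]; abel⟩
  have hbij : Function.Bijective f := by
    refine hsurj.bijective_of_nat_card_le ?_
    rw [hc]; simp
  exact ⟨AddEquiv.ofBijective f hbij, hf⟩

lemma gen_scale (G : Matrix ι ι ℤ) (w y : ι → ℤ) (m : ℤ) (h : GenData G w y m) (t : ℤ)
    (ht : (t : ZMod 13) ≠ 0) : GenData G (t • w) (t • y) (t ^ 2 * m) := by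
  obtain ⟨hw, hy, hm⟩ := h
  refine ⟨fun x => ?_, ?_, ?_⟩
  · obtain ⟨k, l, rfl⟩ := hw x
    have hcop : IsCoprime t 13 := by
      have hp : Prime (13 : ℤ) := by norm_num
      refine ((hp.coprime_iff_not_dvd).2 fun hd => ht ?_).symm
      exact (ZMod.intCast_zmod_eq_zero_iff_dvd t 13).2 hd
    obtain ⟨a, b, hab⟩ := hcop
    refine ⟨k * a, (k * b) • y + l, ?_⟩
    rw [mulVec_add, mulVec_smul, hy, ← add_assoc]
    congr 1
    rw [smul_smul, smul_smul, ← add_smul]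
    congr 1
    linear_combination (-k) * hab
  · rw [mulVec_smul, hy, smul_comm]
  · rw [smul_dotProduct, dotProduct_smul, hm]; simp; ring

lemma qiso_of_gen (G : Matrix ι ι ℤ) (H : Matrix κ κ ℤ) (hG : G.IsSymm) (hH : H.IsSymm)
    (heG : EvenGram G) (hdG : G.det ≠ 0) (hdH : H.det ≠ 0)
    (hcG : Nat.card (Coker G) = 13) (hcH : Nat.card (Coker H) = 13)
    (w y : ι → ℤ) (m : ℤ) (w' y' : κ → ℤ) (m' : ℤ) (h : GenData G w y m) (h' : GenData H w' y' m')
    (hs : (13 : ℤ) ∣ m + m') : QIsoNeg G H := by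
  obtain ⟨e, he⟩ := coker_equiv G hcG w y m h
  obtain ⟨e', he'⟩ := coker_equiv H hcH w' y' m' h'
  refine ⟨e.symm.trans e', fun x => ?_⟩
  obtain ⟨k, l, rfl⟩ := h.1 x
  refine ⟨k • w', ?_, ?_⟩
  · have h1 : (Submodule.Quotient.mk (k • w + G *ᵥ l) : Coker G) = e (k : ZMod 13) := by
      rw [he, Submodule.Quotient.eq]
      exact ⟨l, by rw [Matrix.toLin'_apply]; abel⟩
    rw [h1, ← he']
    simp
  · have h2 := qval_gen H hH hdH w' y' m' h'.2.1 h'.2.2 k 0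
    rw [mulVec_zero, add_zero] at h2
    rw [qval_gen G hG hdG w y m h.2.1 h.2.2 k l, h2]
    obtain ⟨c, hc⟩ := hs
    obtain ⟨d, hd⟩ := heG l
    rw [AddSubgroup.mem_zmultiples_iff]
    refine ⟨k ^ 2 * c + k * (w ⬝ᵥ l) + d, ?_⟩
    have hc' : (m : ℚ) + m' = 13 * c := by exact_mod_cast hc
    rw [hd]
    simp only [BF, dotProduct_zero, zero_dotProduct, zsmul_eq_mul]
    push_cast
    linear_combination (-(2 * (k : ℚ) ^ 2 / 13)) * hc'

lemma dsum_mulVec (G : Matrix ι ι ℤ) (H : Matrix κ κ ℤ) (a : ι → ℤ) (b : κ → ℤ) :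
    dsum G H *ᵥ Sum.elim a b = Sum.elim (G *ᵥ a) (H *ᵥ b) := by
  simp [dsum, fromBlocks_mulVec]

lemma UMat_mulVec (a : Fin 2 → ℤ) : UMat *ᵥ ![a 1, a 0] = a := by
  ext i
  fin_cases i <;> simp [UMat, mulVec, dotProduct, Fin.sum_univ_two]

lemma gen_dsum (H : Matrix κ κ ℤ) (w y : κ → ℤ) (m : ℤ) (h : GenData H w y m) :
    GenData (dsum UMat H) (Sum.elim 0 w) (Sum.elim 0 y) m := by
  obtain ⟨hw, hy, hm⟩ := h
  refine ⟨fun x => ?_, ?_, ?_⟩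
  · obtain ⟨k, l, hl⟩ := hw (x ∘ Sum.inr)
    refine ⟨k, Sum.elim ![(x ∘ Sum.inl) 1, (x ∘ Sum.inl) 0] l, ?_⟩
    rw [dsum_mulVec, UMat_mulVec (x ∘ Sum.inl)]
    ext (i | i)
    · simp
    · have := congrFun hl i
      simpa using this
  · rw [dsum_mulVec, hy, mulVec_zero]
    ext (i | i) <;> simp
  · rw [← hm]; simp [dotProduct]

lemma even_dsum (H : Matrix κ κ ℤ) (h : EvenGram H) : EvenGram (dsum UMat H) := by
  intro x
  obtain ⟨c, hc⟩ := h (x ∘ Sum.inr)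
  have hx : x = Sum.elim (x ∘ Sum.inl) (x ∘ Sum.inr) := by ext (i | i) <;> rfl
  refine ⟨x (Sum.inl 0) * x (Sum.inl 1) + c, ?_⟩
  have h1 : BF (dsum UMat H) x x = BF UMat (x ∘ Sum.inl) (x ∘ Sum.inl) +
      BF H (x ∘ Sum.inr) (x ∘ Sum.inr) := by
    unfold BF
    conv_lhs => rw [hx]
    change _ ⬝ᵥ (dsum UMat H *ᵥ _) = _
    rw [dsum_mulVec, sumElim_dotProduct_sumElim]
  rw [h1, hc]
  simp [BF, UMat, mulVec, dotProduct, Fin.sum_univ_two]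
  ring

lemma symm_dsum (H : Matrix κ κ ℤ) (h : H.IsSymm) : (dsum UMat H).IsSymm := by
  unfold dsum
  refine IsSymm.fromBlocks ?_ (by simp) h
  ext i j
  fin_cases i <;> fin_cases j <;> simp [UMat]

lemma det_dsum (H : Matrix κ κ ℤ) : (dsum UMat H).det = - H.det := by
  unfold dsum
  rw [det_fromBlocks_zero₂₁]
  simp [UMat, det_fin_two]

end fin13

/-- If `L` and `L'` are even lattices of signature `(1,9)`, rank `10` and discriminant `-13`,
each primitively embedded in the K3 lattice, then the discriminant form of `U ⊕ L'` is
isomorphic to minus the discriminant form of `L`; consequently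
`disc (U ⊕ L') = 13 = -disc L`. -/
theorem stmt4 (L L' : Matrix (Fin 10) (Fin 10) ℤ)
    (hL : L.IsSymm) (hL' : L'.IsSymm) (heL : EvenGram L) (heL' : EvenGram L')
    (hsL : SigIs L 1 9) (hsL' : SigIs L' 1 9)
    (hdL : L.det = -13) (hdL' : L'.det = -13)
    (hembL : ∃ f : (Fin 10 → ℤ) →ₗ[ℤ] (K3Ix → ℤ), IsPrimEmb L K3Mat f)
    (hembL' : ∃ f : (Fin 10 → ℤ) →ₗ[ℤ] (K3Ix → ℤ), IsPrimEmb L' K3Mat f) :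
    QIsoNeg (dsum UMat L') L ∧ (dsum UMat L').det = 13 ∧ (13 : ℤ) = -L.det := by
  have hdU : (dsum UMat L').det = 13 := by rw [det_dsum, hdL']; norm_num
  refine ⟨?_, hdU, by rw [hdL]; norm_num⟩
  obtain ⟨w, y, m, hgen, hm, r, hr, hS⟩ := main13 L hL heL hsL hdL
  obtain ⟨w', y', m', hgen', hm', r', hr', hS'⟩ := main13 L' hL' heL' hsL' hdL'
  obtain ⟨t, ht, hmt⟩ := class13 _ _ hm' hm r' r hr' hr hS' hS
  obtain ⟨t, rfl⟩ := ZMod.intCast_surjective t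
  refine qiso_of_gen (dsum UMat L') L (symm_dsum L' hL') hL (even_dsum L' heL')
    (by rw [hdU]; norm_num) (by rw [hdL]; norm_num) ?_ ?_ _ _ m' _ _ (t ^ 2 * m)
    (gen_dsum L' w' y' m' hgen') (gen_scale L w y m hgen t ht) ?_
  · rw [card_coker _ (by rw [hdU]; norm_num), hdU]; rfl
  · rw [card_coker _ (by rw [hdL]; norm_num), hdL]; rfl
  · have h1 : ((m' + t ^ 2 * m : ℤ) : ZMod 13) = 0 := by
      push_cast
      linear_combination hmt
    exact (ZMod.intCast_zmod_eq_zero_iff_dvd _ 13).1 h1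
end

section
/- Every positive-definite even unimodular lattice of rank 16 is isometric to E₈ ⊕ E₈ or to D₁₆⁺. -/
open Matrix

/-- Gram matrix of the even unimodular positive-definite lattice `D₁₆⁺`. -/
def D16Mat : Matrix (Fin 16) (Fin 16) ℤ :=
  !![4,0,0,0,0,0,0,0,0,0,0,0,0,0,0,1;
     0,2,-1,0,0,0,0,0,0,0,0,0,0,0,0,0;
     0,-1,2,-1,0,0,0,0,0,0,0,0,0,0,0,0;
     0,0,-1,2,-1,0,0,0,0,0,0,0,0,0,0,0;
     0,0,0,-1,2,-1,0,0,0,0,0,0,0,0,0,0;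
     0,0,0,0,-1,2,-1,0,0,0,0,0,0,0,0,0;
     0,0,0,0,0,-1,2,-1,0,0,0,0,0,0,0,0;
     0,0,0,0,0,0,-1,2,-1,0,0,0,0,0,0,0;
     0,0,0,0,0,0,0,-1,2,-1,0,0,0,0,0,0;
     0,0,0,0,0,0,0,0,-1,2,-1,0,0,0,0,0;
     0,0,0,0,0,0,0,0,0,-1,2,-1,0,0,0,0;
     0,0,0,0,0,0,0,0,0,0,-1,2,-1,0,0,0;
     0,0,0,0,0,0,0,0,0,0,0,-1,2,-1,0,0;
     0,0,0,0,0,0,0,0,0,0,0,0,-1,2,-1,0;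
     0,0,0,0,0,0,0,0,0,0,0,0,0,-1,2,-2;
     1,0,0,0,0,0,0,0,0,0,0,0,0,0,-2,4]

section Mink
open MeasureTheory Metric

theorem mink_aux {k : ℕ} (A : Matrix (Fin k) (Fin k) ℝ) (hA : A.det ≠ 0)
    (hv : ENNReal.ofReal |A.det| * 2 ^ k <
      volume (ball (0 : EuclideanSpace ℝ (Fin k)) (Real.sqrt 6))) :
    ∃ x : Fin k → ℤ, x ≠ 0 ∧
      (A *ᵥ fun i => (x i : ℝ)) ⬝ᵥ (A *ᵥ fun i => (x i : ℝ)) < 6 := by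
  set S : Set (Fin k → ℝ) := {v | v ⬝ᵥ v < 6} with hS
  have hball : (WithLp.toLp 2 : (Fin k → ℝ) → EuclideanSpace ℝ (Fin k)) ⁻¹'
      (ball 0 (Real.sqrt 6)) = S := by
    ext v
    simp only [Set.mem_preimage, mem_ball, dist_zero_right, hS, Set.mem_ofPred_eq,
      EuclideanSpace.norm_eq]
    rw [Real.sqrt_lt_sqrt_iff (by positivity)]
    simp [dotProduct, sq]
  have hSv : volume S = volume (ball (0 : EuclideanSpace ℝ (Fin k)) (Real.sqrt 6)) := by
    rw [← hball]
    exact (PiLp.volume_preserving_toLp (Fin k)).measure_preimage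
      measurableSet_ball.nullMeasurableSet
  have hSconv : Convex ℝ S := by
    rw [← hball]
    exact (convex_ball (0 : EuclideanSpace ℝ (Fin k)) (Real.sqrt 6)).linear_preimage
      (WithLp.linearEquiv 2 ℝ (Fin k → ℝ)).symm.toLinearMap
  have hdet : LinearMap.det (Matrix.toLin' A) ≠ 0 := by simpa using hA
  have hvol : volume ((Matrix.toLin' A) ⁻¹' S) = ENNReal.ofReal |A.det|⁻¹ * volume S := by
    rw [Measure.addHaar_preimage_linearMap volume hdet]
    simp [abs_inv]
  have hpos : 0 < |A.det| := abs_pos.mpr hA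
  have hct : Countable (Submodule.span ℤ (Set.range (Pi.basisFun ℝ (Fin k)))).toAddSubgroup :=
    inferInstanceAs (Countable (Submodule.span ℤ (Set.range (Pi.basisFun ℝ (Fin k)))))
  obtain ⟨x, hx0, hx⟩ := exists_ne_zero_mem_lattice_of_measure_mul_two_pow_lt_measure
    (μ := (volume : Measure (Fin k → ℝ))) (s := (Matrix.toLin' A) ⁻¹' S)
    (ZSpan.isAddFundamentalDomain' (Pi.basisFun ℝ (Fin k)) volume)
    (by
      intro v hv
      simp only [Set.mem_preimage, hS, Set.mem_ofPred_eq, map_neg, neg_dotProduct_neg] at hv ⊢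
      exact hv)
    (hSconv.linear_preimage _)
    (by
      rw [hvol, hSv, ZSpan.volume_fundamentalDomain]
      have h1 : (Matrix.of ⇑(Pi.basisFun ℝ (Fin k))).det = 1 := by
        have : (Matrix.of ⇑(Pi.basisFun ℝ (Fin k))) = 1 := by
          ext i j
          simp [Pi.basisFun_apply, Matrix.one_apply, Pi.single_apply, eq_comm]
        rw [this, det_one]
      rw [h1]
      simp only [abs_one, ENNReal.ofReal_one, one_mul, Module.finrank_fintype_fun_eq_card,
        Fintype.card_fin]
      rw [ENNReal.ofReal_inv_of_pos hpos]
      rw [mul_comm, ← div_eq_mul_inv]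
      rw [ENNReal.lt_div_iff_mul_lt (Or.inl (by simpa using hA)) (Or.inl (by simp))]
      rwa [mul_comm])
  obtain ⟨x, hxm⟩ := x
  have hxm' : x ∈ Submodule.span ℤ (Set.range (Pi.basisFun ℝ (Fin k))) := hxm
  rw [Module.Basis.mem_span_iff_repr_mem] at hxm'
  choose z hz using hxm'
  have hz' : x = fun i => (z i : ℝ) := by
    ext i
    have := hz i
    simp at this
    exact this.symm
  refine ⟨z, ?_, ?_⟩
  · rintro rfl
    apply hx0
    ext i
    simp [hz']
  · rw [← hz']
    simpa [hS] using hx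

def Dk (k : ℕ) : ℤ := if k = 2 then 16 else if k = 16 then 12 else 48

theorem vol_aux {k : ℕ} (h2 : 2 ≤ k) (h16 : k ≤ 16) :
    ∃ V : ℝ, 0 ≤ V ∧ (Dk k : ℝ) * 4 ^ k < V ^ 2 * 6 ^ k ∧
      volume (ball (0 : EuclideanSpace ℝ (Fin k)) (Real.sqrt 6)) =
        ENNReal.ofReal (Real.sqrt 6) ^ k * ENNReal.ofReal V := by
  have hpi : (3.14 : ℝ) < Real.pi := Real.pi_gt_d2
  obtain ⟨m, hm | hm⟩ := Nat.even_or_odd' k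
  · have : Nontrivial (EuclideanSpace ℝ (Fin k)) := by
      apply Module.nontrivial_of_finrank_pos (R := ℝ)
      rw [finrank_euclideanSpace_fin]; omega
    refine ⟨Real.pi ^ m / m.factorial, by positivity, ?_, ?_⟩
    · have hm1 : 1 ≤ m := by omega
      have hm8 : m ≤ 8 := by omega
      subst hm
      have h3 : (3.14 ^ m / (m.factorial : ℝ)) ^ 2 ≤ (Real.pi ^ m / m.factorial) ^ 2 := by
        gcongr
      refine lt_of_lt_of_le ?_ (mul_le_mul_of_nonneg_right h3 (by positivity))
      interval_cases m <;> norm_num [Dk, Nat.factorial]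
    · have := InnerProductSpace.volume_ball_of_dim_even (E := EuclideanSpace ℝ (Fin k)) (k := m)
        (by simpa using hm) 0 (Real.sqrt 6)
      rw [this, finrank_euclideanSpace_fin]
  · refine ⟨Real.pi ^ m * 2 ^ (m + 1) / (k.doubleFactorial : ℝ), by positivity, ?_, ?_⟩
    · have hm1 : 1 ≤ m := by omega
      have hm8 : m ≤ 7 := by omega
      subst hm
      have h3 : (3.14 ^ m * 2 ^ (m + 1) / ((2 * m + 1).doubleFactorial : ℝ)) ^ 2 ≤
          (Real.pi ^ m * 2 ^ (m + 1) / ((2 * m + 1).doubleFactorial : ℝ)) ^ 2 := by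
        gcongr
      refine lt_of_lt_of_le ?_ (mul_le_mul_of_nonneg_right h3 (by positivity))
      interval_cases m <;> norm_num [Dk, Nat.doubleFactorial]
    · have := InnerProductSpace.volume_ball_of_dim_odd (E := EuclideanSpace ℝ (Fin k)) (k := m)
        (by simpa using hm) 0 (Real.sqrt 6)
      rw [this, finrank_euclideanSpace_fin]

theorem real_psd {k : ℕ} (G : Matrix (Fin k) (Fin k) ℤ) (hs : G.IsSymm)
    (hnn : ∀ x : Fin k → ℤ, 0 ≤ x ⬝ᵥ G *ᵥ x) :
    (G.map (Int.cast : ℤ → ℝ)).PosSemidef := by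
  set R := G.map (Int.cast : ℤ → ℝ) with hR
  have hcst : ∀ x : Fin k → ℤ, (fun i => (x i : ℝ)) ⬝ᵥ R *ᵥ (fun i => (x i : ℝ)) =
      ((x ⬝ᵥ G *ᵥ x : ℤ) : ℝ) := by
    intro x
    simp [dotProduct, mulVec, hR]
  have hrat : ∀ x : Fin k → ℚ, 0 ≤ (fun i => (x i : ℝ)) ⬝ᵥ R *ᵥ (fun i => (x i : ℝ)) := by
    intro x
    obtain ⟨b, hb⟩ := IsLocalization.exist_integer_multiples_of_finite (nonZeroDivisors ℤ) x
    choose z hz using hb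
    have hb0 : ((b : ℤ) : ℝ) ≠ 0 := by
      have := nonZeroDivisors.ne_zero b.2
      exact_mod_cast this
    have h1 : ∀ i, ((b : ℤ) : ℝ) * (x i : ℝ) = (z i : ℝ) := by
      intro i
      have := hz i
      simp only [algebraMap_int_eq, eq_intCast, zsmul_eq_mul] at this
      exact_mod_cast this.symm
    have h2 := hnn z
    have h3 : (fun i => (z i : ℝ)) = ((b : ℤ) : ℝ) • (fun i => (x i : ℝ)) := by
      ext i; simp [h1]
    have h4 := hcst z
    rw [h3, mulVec_smul, smul_dotProduct, dotProduct_smul, smul_eq_mul, smul_eq_mul,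
      ← mul_assoc] at h4
    have h5 : (0 : ℝ) ≤ ((z ⬝ᵥ G *ᵥ z : ℤ) : ℝ) := by exact_mod_cast h2
    rw [← h4] at h5
    exact nonneg_of_mul_nonneg_right h5 (mul_self_pos.mpr hb0)
  refine PosSemidef.of_dotProduct_mulVec_nonneg ?_ ?_
  · rw [IsHermitian, conjTranspose_eq_transpose_of_trivial]
    ext i j
    simp [hR, hs.apply i j]
  · have hdense : DenseRange (fun (x : Fin k → ℚ) (i : Fin k) => (x i : ℝ)) :=
      DenseRange.piMap (fun _ => Rat.denseRange_cast)
    intro v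
    simp only [star_trivial]
    refine hdense.induction_on (p := fun v => 0 ≤ v ⬝ᵥ R *ᵥ v) v ?_ hrat
    refine isClosed_le continuous_const ?_
    fun_prop

open scoped MatrixOrder in
theorem mink {k : ℕ} (h2 : 2 ≤ k) (h16 : k ≤ 16) (G : Matrix (Fin k) (Fin k) ℤ) (hs : G.IsSymm)
    (hnn : ∀ x : Fin k → ℤ, 0 ≤ x ⬝ᵥ G *ᵥ x) (h0 : G.det ≠ 0) (hD : G.det ≤ Dk k) :
    ∃ x : Fin k → ℤ, x ≠ 0 ∧ x ⬝ᵥ G *ᵥ x < 6 := by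
  have hpsd := real_psd G hs hnn
  obtain ⟨A, hA⟩ := CStarAlgebra.nonneg_iff_eq_star_mul_self.mp hpsd.nonneg
  rw [star_eq_conjTranspose, conjTranspose_eq_transpose_of_trivial] at hA
  have hdet : (G.det : ℝ) = A.det ^ 2 := by
    have : (G.map (Int.cast : ℤ → ℝ)).det = (G.det : ℝ) := (Int.cast_det G).symm
    rw [← this, hA, det_mul, det_transpose, sq]
  have hA0 : A.det ≠ 0 := by
    intro h
    rw [h] at hdet
    apply h0
    have : (G.det : ℝ) = 0 := by rw [hdet]; ring
    exact_mod_cast this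
  obtain ⟨V, hV0, hV, hvol⟩ := vol_aux h2 h16
  obtain ⟨x, hx0, hx⟩ := mink_aux A hA0 (by
    rw [hvol, ← ENNReal.ofReal_pow (Real.sqrt_nonneg 6), ← ENNReal.ofReal_mul (by positivity)]
    have : (2 : ENNReal) ^ k = ENNReal.ofReal (2 ^ k) := by
      rw [ENNReal.ofReal_pow (by norm_num)]; simp
    rw [this, ← ENNReal.ofReal_mul (by positivity)]
    have hlt : |A.det| * 2 ^ k < Real.sqrt 6 ^ k * V := by
      apply lt_of_pow_lt_pow_left₀ 2 (by positivity)
      rw [mul_pow, mul_pow, sq_abs, ← hdet, ← pow_mul, ← pow_mul, mul_comm k 2, pow_mul, pow_mul,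
        Real.sq_sqrt (by norm_num)]
      have : (G.det : ℝ) ≤ (Dk k : ℝ) := by exact_mod_cast hD
      calc (G.det : ℝ) * (2 ^ 2) ^ k ≤ (Dk k : ℝ) * 4 ^ k := by
            norm_num; gcongr
        _ < _ := by linarith
    exact (ENNReal.ofReal_lt_ofReal_iff (lt_of_le_of_lt (by positivity) hlt)).mpr hlt)
  refine ⟨x, hx0, ?_⟩
  have h1 : ((x ⬝ᵥ G *ᵥ x : ℤ) : ℝ) = (fun i => (x i : ℝ)) ⬝ᵥ
      (G.map (Int.cast : ℤ → ℝ)) *ᵥ (fun i => (x i : ℝ)) := by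
    simp [dotProduct, mulVec]
  have h6 : ∀ v : Fin k → ℝ, v ⬝ᵥ (Aᵀ * A) *ᵥ v = (A *ᵥ v) ⬝ᵥ (A *ᵥ v) := by
    intro v
    rw [← mulVec_mulVec, dotProduct_mulVec, vecMul_transpose]
  rw [hA, h6] at h1
  rw [← h1] at hx
  exact_mod_cast hx

end Mink

section PartB1

theorem qf_symm {k : ℕ} {G : Matrix (Fin k) (Fin k) ℤ} (hs : G.IsSymm) (x y : Fin k → ℤ) :
    x ⬝ᵥ G *ᵥ y = y ⬝ᵥ G *ᵥ x := by
  rw [dotProduct_comm, dotProduct_mulVec, ← mulVec_transpose, hs.eq]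

theorem rank_one_mulVec {k : ℕ} (r d x : Fin k → ℤ) :
    (replicateCol Unit r * replicateRow Unit d) *ᵥ x = (d ⬝ᵥ x) • r := by
  ext i
  simp only [mulVec, dotProduct, mul_apply, replicateCol_apply, replicateRow_apply,
    Finset.univ_unique, Finset.sum_singleton, Pi.smul_apply, smul_eq_mul]
  rw [Finset.sum_mul]
  exact Finset.sum_congr rfl fun a _ => by ring

/-- An integer matrix of determinant `1` or `2` whose image lies in the kernel of `l`. -/
theorem sub_index_two {k : ℕ} (l : (Fin k → ℤ) →ₗ[ℤ] ZMod 2) :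
    ∃ P : Matrix (Fin k) (Fin k) ℤ, (P.det = 1 ∨ P.det = 2) ∧ ∀ x, l (P *ᵥ x) = 0 := by
  by_cases h : ∀ i, l (Pi.single i 1) = 0
  · refine ⟨1, by simp, fun x => ?_⟩
    have : l = 0 := by
      refine LinearMap.pi_ext' fun i => ?_
      ext
      simpa using h i
    simp [this]
  · push Not at h
    obtain ⟨j, hj⟩ := h
    have h01 : ∀ a : ZMod 2, a ≠ 0 → a = 1 := by decide
    have hj1 := h01 _ hj
    set d : Fin k → ℤ := fun i => ((l (Pi.single i 1)).val : ℤ) with hd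
    refine ⟨1 + replicateCol Unit (Pi.single j (1 : ℤ)) * replicateRow Unit d, ?_, fun x => ?_⟩
    · right
      rw [det_one_add_replicateCol_mul_replicateRow]
      simp only [hd, dotProduct_single, mul_one, hj1]
      rfl
    · have h1 : (1 + replicateCol Unit (Pi.single j (1 : ℤ)) * replicateRow Unit d) *ᵥ x =
          x + (d ⬝ᵥ x) • (Pi.single j (1 : ℤ) : Fin k → ℤ) := by
        rw [add_mulVec, one_mulVec, rank_one_mulVec]
      have h2 : l x = ((d ⬝ᵥ x : ℤ) : ZMod 2) := by
        conv_lhs => rw [pi_eq_sum_univ' x]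
        simp only [map_sum, dotProduct, Int.cast_sum, Int.cast_mul, hd]
        refine Finset.sum_congr rfl fun a _ => ?_
        rw [map_smul]
        simp
        rw [mul_comm]
      rw [h1, map_add, map_smul, hj1, h2]
      simp only [zsmul_eq_mul, mul_one]
      generalize ((d ⬝ᵥ x : ℤ) : ZMod 2) = a
      revert a
      decide

theorem mink_sub {k : ℕ} (h2 : 2 ≤ k) (h16 : k ≤ 16) (Q P : Matrix (Fin k) (Fin k) ℤ)
    (hs : Q.IsSymm) (hpos : ∀ x : Fin k → ℤ, x ≠ 0 → 0 < x ⬝ᵥ Q *ᵥ x)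
    (hQ : Q.det ≠ 0) (hP : P.det ≠ 0) (hD : P.det ^ 2 * Q.det ≤ Dk k) :
    ∃ y : Fin k → ℤ, P *ᵥ y ≠ 0 ∧ (P *ᵥ y) ⬝ᵥ Q *ᵥ (P *ᵥ y) < 6 := by
  have hn : ∀ x : Fin k → ℤ, 0 ≤ x ⬝ᵥ Q *ᵥ x := by
    intro x
    by_cases h : x = 0
    · simp [h]
    · exact (hpos x h).le
  have he : ∀ x : Fin k → ℤ, x ⬝ᵥ (Pᵀ * Q * P) *ᵥ x = (P *ᵥ x) ⬝ᵥ Q *ᵥ (P *ᵥ x) := by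
    intro x
    rw [← mulVec_mulVec, ← mulVec_mulVec, dotProduct_mulVec, vecMul_transpose]
  obtain ⟨y, hy, hlt⟩ := mink h2 h16 (Pᵀ * Q * P)
    (by rw [IsSymm, transpose_mul, transpose_mul, transpose_transpose, hs.eq, mul_assoc])
    (fun x => by rw [he]; exact hn _)
    (by simp [det_mul, hQ, hP])
    (by
      rw [det_mul, det_mul, det_transpose]
      linarith [hD, show P.det * Q.det * P.det = P.det ^ 2 * Q.det by ring])
  refine ⟨y, fun h => hy ?_, by rwa [he] at hlt⟩
  exact eq_zero_of_mulVec_eq_zero hP h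

theorem exists_short {k : ℕ} (h1 : 1 ≤ k) (h16 : k ≤ 16) (G : Matrix (Fin k) (Fin k) ℤ)
    (hs : G.IsSymm) (hpos : ∀ x : Fin k → ℤ, x ≠ 0 → 0 < x ⬝ᵥ G *ᵥ x)
    (hdet : G.det = 1 ∨ G.det = -1)
    (hev : k = 16 → ∀ x : Fin k → ℤ, 2 ∣ x ⬝ᵥ G *ᵥ x) :
    ∃ y : Fin k → ℤ, y ⬝ᵥ G *ᵥ y = 1 ∨ y ⬝ᵥ G *ᵥ y = 4 := by
  have hG0 : G.det ≠ 0 := by rcases hdet with h | h <;> simp [h]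
  have hG1 : G.det ≤ 1 := by rcases hdet with h | h <;> simp [h]
  have hadd : ∀ x y : Fin k → ℤ, (x + y) ⬝ᵥ G *ᵥ (x + y) =
      x ⬝ᵥ G *ᵥ x + 2 * (x ⬝ᵥ G *ᵥ y) + y ⬝ᵥ G *ᵥ y := by
    intro x y
    rw [mulVec_add, add_dotProduct, dotProduct_add, dotProduct_add, qf_symm hs y x]
    ring
  rcases Nat.lt_or_ge k 3 with hk | hk
  · obtain rfl | rfl : k = 1 ∨ k = 2 := by omega
    · refine ⟨fun _ => 1, Or.inl ?_⟩
      have := hpos (fun _ => 1) (by intro h; simpa using congrFun h 0)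
      rw [det_fin_one] at hdet
      simp [dotProduct, mulVec] at this ⊢
      omega
    · obtain ⟨y, hy, hlt⟩ := mink_sub le_rfl h16 ((3 : ℤ) • G) 1
        (by rw [IsSymm, transpose_smul, hs.eq])
        (fun x hx => by
          rw [smul_mulVec, dotProduct_smul]
          have := hpos x hx
          simp only [smul_eq_mul]; omega)
        (by rw [det_smul]; simp [hG0]) (by simp)
        (by
          simp only [det_one, det_smul, Fintype.card_fin, Dk]
          norm_num
          linarith)
      rw [smul_mulVec, dotProduct_smul] at hlt
      have := hpos _ hy
      refine ⟨_, Or.inl (?_ : (1 *ᵥ y) ⬝ᵥ G *ᵥ (1 *ᵥ y) = 1)⟩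
      simp only [smul_eq_mul] at hlt
      omega
  · have hDk : 12 ≤ Dk k := by
      unfold Dk; split_ifs <;> omega
    let par : (Fin k → ℤ) →ₗ[ℤ] ZMod 2 := AddMonoidHom.toIntLinearMap
      (AddMonoidHom.mk' (fun x => ((x ⬝ᵥ G *ᵥ x : ℤ) : ZMod 2)) (fun x y => by
        rw [hadd]
        push_cast
        rw [show (2 : ZMod 2) = 0 from rfl]
        ring))
    have hpar : ∀ x, par x = 0 → 2 ∣ x ⬝ᵥ G *ᵥ x := by
      intro x hx
      have : ((x ⬝ᵥ G *ᵥ x : ℤ) : ZMod 2) = 0 := hx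
      exact (ZMod.intCast_zmod_eq_zero_iff_dvd _ 2).mp this
    obtain ⟨P, hP, hPl⟩ := sub_index_two par
    have hP0 : P.det ≠ 0 := by rcases hP with h | h <;> simp [h]
    have hP4 : P.det ^ 2 ≤ 4 := by rcases hP with h | h <;> simp [h]
    obtain ⟨y, hy, hlt⟩ := mink_sub (by omega) h16 G P hs hpos hG0 hP0
      (by nlinarith [sq_nonneg P.det])
    obtain ⟨r, hr⟩ : ∃ r, r = P *ᵥ y := ⟨_, rfl⟩
    have hev2 := hpar _ (hPl y)
    have hp := hpos _ hy
    rw [← hr] at hev2 hp hlt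
    rcases (by omega : r ⬝ᵥ G *ᵥ r = 2 ∨ r ⬝ᵥ G *ᵥ r = 4) with h | h
    swap
    · exact ⟨r, Or.inr h⟩
    · let lr : (Fin k → ℤ) →ₗ[ℤ] ZMod 2 := AddMonoidHom.toIntLinearMap
        (AddMonoidHom.mk' (fun x => ((r ⬝ᵥ G *ᵥ x : ℤ) : ZMod 2)) (fun x y => by
          rw [mulVec_add, dotProduct_add]
          push_cast
          rfl))
      have hlr : ∀ x, lr x = 0 → 2 ∣ r ⬝ᵥ G *ᵥ x := by
        intro x hx
        have : ((r ⬝ᵥ G *ᵥ x : ℤ) : ZMod 2) = 0 := hx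
        exact (ZMod.intCast_zmod_eq_zero_iff_dvd _ 2).mp this
      obtain ⟨P', hP', hPl'⟩ := sub_index_two (lr.comp (Matrix.mulVecLin P))
      have hP0' : P'.det ≠ 0 := by rcases hP' with h | h <;> simp [h]
      obtain ⟨P'', hP0'', hPD'', hPl1, hPl2⟩ : ∃ P'' : Matrix (Fin k) (Fin k) ℤ, P''.det ≠ 0 ∧
          P''.det ^ 2 * 3 ≤ Dk k ∧ (∀ x, 2 ∣ (P'' *ᵥ x) ⬝ᵥ G *ᵥ (P'' *ᵥ x)) ∧
          ∀ x, 2 ∣ r ⬝ᵥ G *ᵥ (P'' *ᵥ x) := by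
        by_cases hk16 : k = 16
        · obtain ⟨P1, hP1, hPl1⟩ := sub_index_two lr
          refine ⟨P1, ?_, ?_, fun x => hev hk16 _, fun x => hlr _ (hPl1 x)⟩
          · rcases hP1 with h | h <;> simp [h]
          · rcases hP1 with h | h <;> rw [h] <;> norm_num <;> omega
        · have hDk : Dk k = 48 := by
            unfold Dk; split_ifs <;> omega
          refine ⟨P * P', ?_, ?_, fun x => ?_, fun x => ?_⟩
          · simp [det_mul, hP0, hP0']
          · rw [det_mul, hDk]
            rcases hP' with h' | h' <;> rcases hP with h | h <;> rw [h, h'] <;> norm_num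
          · rw [← mulVec_mulVec]; exact hpar _ (hPl _)
          · rw [← mulVec_mulVec]; exact hlr _ (hPl' x)
      let Q := G * (1 + replicateCol Unit r * replicateRow Unit (G *ᵥ r))
      have hQdet : Q.det = G.det * 3 := by
        simp only [Q]
        rw [det_mul, det_one_add_replicateCol_mul_replicateRow, dotProduct_comm, h]
        norm_num
      have hQv : ∀ x, Q *ᵥ x = G *ᵥ x + (r ⬝ᵥ G *ᵥ x) • G *ᵥ r := by
        intro x
        simp only [Q]
        rw [← mulVec_mulVec, add_mulVec, one_mulVec, mulVec_add]
        congr 1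
        rw [← mulVec_smul]
        congr 1
        have : r ⬝ᵥ G *ᵥ x = (G *ᵥ r) ⬝ᵥ x := by
          rw [qf_symm hs, dotProduct_comm]
        rw [this, rank_one_mulVec]
      have hQq : ∀ x z, x ⬝ᵥ Q *ᵥ z = x ⬝ᵥ G *ᵥ z + (r ⬝ᵥ G *ᵥ z) * (r ⬝ᵥ G *ᵥ x) := by
        intro x z
        rw [hQv, dotProduct_add, dotProduct_smul, smul_eq_mul, qf_symm hs x r]
      have hQs : Q.IsSymm := by
        ext i j
        have e1 := hQq (Pi.single i 1) (Pi.single j 1)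
        have e2 := hQq (Pi.single j 1) (Pi.single i 1)
        rw [qf_symm hs (Pi.single j 1) (Pi.single i 1)] at e2
        simp only [mulVec_single_one, single_one_dotProduct, col_apply, transpose_apply] at e1 e2 ⊢
        rw [e1, e2]
        ring
      obtain ⟨z, hz, hzlt⟩ := mink_sub (by omega) h16 Q P'' hQs
        (fun x hx => by
          rw [hQq]
          nlinarith [hpos x hx, mul_self_nonneg (r ⬝ᵥ G *ᵥ x)])
        (by rw [hQdet]; simp [hG0]) hP0''
        (by rw [hQdet]; nlinarith [sq_nonneg P''.det])
      have f1 := hPl1 z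
      have f2 := hPl2 z
      have f3 := hpos _ hz
      rw [hQq] at hzlt
      obtain ⟨v, hv⟩ : ∃ v, v = P'' *ᵥ z := ⟨_, rfl⟩
      rw [← hv] at f1 f2 f3 hzlt
      obtain ⟨a, ha⟩ := f1
      obtain ⟨b, hb⟩ := f2
      rw [ha, hb] at hzlt
      rw [ha] at f3
      have hb0 : b = 0 := by
        by_contra hb0
        have : 1 ≤ b * b := by
          have := mul_self_pos.mpr hb0
          omega
        have : 2 * b * (2 * b) = 4 * (b * b) := by ring
        omega
      rcases (by subst hb0; omega : a = 1 ∨ a = 2) with rfl | rfl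
      · refine ⟨r + v, Or.inr ?_⟩
        rw [hadd, h, ha, hb, hb0]
        norm_num
      · exact ⟨v, Or.inr (by rw [ha]; norm_num)⟩

end PartB1

section Forms

/-- Integral bilinear forms. -/
abbrev IntFrm (M : Type*) [AddCommGroup M] := M →ₗ[ℤ] M →ₗ[ℤ] ℤ

/-- Symmetric unimodular forms. -/
structure IsU {M : Type*} [AddCommGroup M] (B : IntFrm M) : Prop where
  symm : ∀ x y, B x y = B y x
  surj : ∀ f : M →ₗ[ℤ] ℤ, ∃ x, ∀ y, B x y = f y
  nd : ∀ x, (∀ y, B x y = 0) → x = 0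

/-- Positive definite forms. -/
def PD {M : Type*} [AddCommGroup M] (B : IntFrm M) : Prop := ∀ x, x ≠ 0 → 0 < B x x

/-- Isometry of forms. -/
def FIso {M N : Type*} [AddCommGroup M] [AddCommGroup N]
    (B : IntFrm M) (C : IntFrm N) : Prop :=
  ∃ e : M ≃ₗ[ℤ] N, ∀ x y, C (e x) (e y) = B x y

/-- Orthogonal sum. -/
def osum {M N : Type*} [AddCommGroup M] [AddCommGroup N]
    (B : IntFrm M) (C : IntFrm N) : IntFrm (M × N) :=
  LinearMap.mk₂ ℤ (fun x y => B x.1 y.1 + C x.2 y.2)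
    (by intros; simp; ring) (by intros; simp; ring)
    (by intros; simp; ring) (by intros; simp; ring)

/-- Restriction of a form to a submodule. -/
def restr {M : Type*} [AddCommGroup M] (B : IntFrm M) (S : Submodule ℤ M) : IntFrm S :=
  LinearMap.mk₂ ℤ (fun x y => B x y)
    (by intros; simp) (by intros; simp)
    (by intros; simp) (by intros; simp)

/-- The form `e * x * y` on the integers. -/
def rk1 (e : ℤ) : IntFrm ℤ :=
  LinearMap.mk₂ ℤ (fun x y => e * (x * y))
    (by intros; ring) (by intros; simp; ring)
    (by intros; ring) (by intros; simp; ring)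

variable {M N K M' N' : Type*} [AddCommGroup M] [AddCommGroup N]
  [AddCommGroup K] [AddCommGroup M'] [AddCommGroup N']

@[simp] theorem osum_apply (B : IntFrm M) (C : IntFrm N) (x y : M × N) :
    osum B C x y = B x.1 y.1 + C x.2 y.2 := rfl

@[simp] theorem restr_apply (B : IntFrm M) (S : Submodule ℤ M) (x y : S) :
    restr B S x y = B x y := rfl

@[simp] theorem rk1_apply (e x y : ℤ) : rk1 e x y = e * (x * y) := rfl

theorem FIso.refl (B : IntFrm M) : FIso B B := ⟨LinearEquiv.refl ℤ M, fun _ _ => rfl⟩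

theorem FIso.symm {B : IntFrm M} {C : IntFrm N} (h : FIso B C) : FIso C B := by
  obtain ⟨e, he⟩ := h
  exact ⟨e.symm, fun x y => by rw [← he]; simp⟩

theorem FIso.trans {B : IntFrm M} {C : IntFrm N} {D : IntFrm K} (h : FIso B C) (h' : FIso C D) :
    FIso B D := by
  obtain ⟨e, he⟩ := h
  obtain ⟨f, hf⟩ := h'
  exact ⟨e.trans f, fun x y => by simp [he, hf]⟩

theorem FIso.osum {B : IntFrm M} {C : IntFrm N} {B' : IntFrm M'} {C' : IntFrm N'} (h : FIso B B')
    (h' : FIso C C') : FIso (osum B C) (osum B' C') := by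
  obtain ⟨e, he⟩ := h
  obtain ⟨f, hf⟩ := h'
  exact ⟨e.prodCongr f, fun x y => by simp [he, hf]⟩

theorem osum_assoc (B : IntFrm M) (C : IntFrm N) (D : IntFrm K) :
    FIso (osum (osum B C) D) (osum B (osum C D)) :=
  ⟨LinearEquiv.prodAssoc ℤ M N K, fun x y => by simp [add_assoc]⟩

theorem osum_comm (B : IntFrm M) (C : IntFrm N) : FIso (osum B C) (osum C B) :=
  ⟨LinearEquiv.prodComm ℤ M N, fun x y => by simp [add_comm]⟩

theorem osum_left_comm (B : IntFrm M) (C : IntFrm N) (D : IntFrm K) :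
    FIso (osum B (osum C D)) (osum C (osum B D)) :=
  ((osum_assoc B C D).symm.trans ((osum_comm B C).osum (FIso.refl D))).trans (osum_assoc C B D)

theorem FIso.isU {B : IntFrm M} {C : IntFrm N} (h : FIso B C) (hB : IsU B) : IsU C := by
  obtain ⟨e, he⟩ := h.symm
  refine ⟨fun x y => by rw [← he, hB.symm, he], fun f => ?_, fun x hx => ?_⟩
  · obtain ⟨x, hx⟩ := hB.surj (f.comp e.symm.toLinearMap)
    refine ⟨e.symm x, fun y => ?_⟩
    rw [← he]
    simp [hx]
  · have := hB.nd (e x) (fun y => by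
      have := hx (e.symm y)
      rw [← he] at this
      simpa using this)
    simpa using this

theorem osum_isU {B : IntFrm M} {C : IntFrm N} (hB : IsU B) (hC : IsU C) : IsU (osum B C) := by
  refine ⟨fun x y => by simp [hB.symm x.1, hC.symm x.2], fun f => ?_, fun x hx => ?_⟩
  · obtain ⟨x, hx⟩ := hB.surj (f.comp (LinearMap.inl ℤ M N))
    obtain ⟨y, hy⟩ := hC.surj (f.comp (LinearMap.inr ℤ M N))
    refine ⟨(x, y), fun z => ?_⟩
    simp only [osum_apply, hx, hy, LinearMap.comp_apply, LinearMap.inl_apply, LinearMap.inr_apply,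
      ← map_add]
    simp
  · ext
    · exact hB.nd _ fun y => by simpa using hx (y, 0)
    · exact hC.nd _ fun y => by simpa using hx (0, y)

theorem rk1_isU {e : ℤ} (he : e * e = 1) : IsU (rk1 e) := by
  refine ⟨fun x y => by simp; left; ring, fun f => ⟨e * f 1, fun y => ?_⟩, fun x hx => ?_⟩
  · have : f y = y * f 1 := by
      rw [← smul_eq_mul, ← map_smul]; simp
    rw [rk1_apply, this]
    linear_combination (f 1 * y) * he
  · have := hx 1
    simp at this
    rcases this with h | h
    · simp [h] at he
    · exact h

theorem restr_PD {B : IntFrm M} (hB : PD B) (S : Submodule ℤ M) : PD (restr B S) := by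
  intro x hx
  exact hB x (by simpa using hx)

theorem split_form {B : IntFrm M} (hB : IsU B) {w : M} {e : ℤ} (he : e * e = 1) (hw : B w w = e) :
    IsU (restr B (LinearMap.ker (B w))) ∧
      FIso B (osum (rk1 e) (restr B (LinearMap.ker (B w)))) := by
  have hker : ∀ x, x - (e * B w x) • w ∈ LinearMap.ker (B w) := by
    intro x
    simp only [LinearMap.mem_ker, map_sub, map_smul, smul_eq_mul, hw]
    linear_combination (-(B w x)) * he
  have hiso : FIso (osum (rk1 e) (restr B (LinearMap.ker (B w)))) B := by
    refine ⟨LinearEquiv.ofBijective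
      (LinearMap.coprod (LinearMap.toSpanSingleton ℤ M w) (Submodule.subtype _)) ⟨?_, ?_⟩, ?_⟩
    · rw [injective_iff_map_eq_zero]
      rintro ⟨a, x, hx⟩ h
      simp only [LinearMap.coprod_apply, LinearMap.toSpanSingleton_apply,
        Submodule.subtype_apply] at h
      have h2 := congrArg (B w) h
      have hx' : B w x = 0 := hx
      simp only [map_add, map_smul, hw, hx', smul_eq_mul, map_zero, add_zero] at h2
      have ha : a = 0 := by linear_combination e * h2 - a * he
      subst ha
      simp at h
      simp [h]
    · intro x
      refine ⟨(e * B w x, ⟨_, hker x⟩), ?_⟩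
      simp [LinearMap.toSpanSingleton_apply]
    · rintro ⟨a, x, hx⟩ ⟨b, y, hy⟩
      have hx' : B w x = 0 := hx
      have hy' : B w y = 0 := hy
      have hx'' : B x w = 0 := by rw [hB.symm, hx']
      change B (a • w + x) (b • w + y) = _
      simp only [map_add, map_smul, LinearMap.add_apply, LinearMap.smul_apply, smul_eq_mul, hw, hy',
        hx'', osum_apply, rk1_apply, restr_apply]
      ring
  refine ⟨⟨fun x y => hB.symm _ _, fun f => ?_, fun x hx => ?_⟩, hiso.symm⟩
  · let p : M →ₗ[ℤ] LinearMap.ker (B w) := LinearMap.codRestrict _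
      (LinearMap.id - (LinearMap.toSpanSingleton ℤ M w).comp (e • B w)) (fun x => by
        simpa [LinearMap.toSpanSingleton_apply] using hker x)
    obtain ⟨x, hx⟩ := hB.surj (f.comp p)
    have hxw : B w x = 0 := by
      rw [hB.symm, hx]
      have : p w = 0 := by
        ext
        simp [p, LinearMap.toSpanSingleton_apply, hw, he]
      simp [this]
    refine ⟨⟨x, hxw⟩, fun y => ?_⟩
    rw [restr_apply, hx]
    have : p y = y := by
      ext
      simp [p, LinearMap.toSpanSingleton_apply]
    simp [this]
  · ext
    apply hB.nd
    intro y
    have h1 := hx ⟨_, hker y⟩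
    have h2 : B w x = 0 := x.2
    rw [hB.symm] at h2
    simpa [h2] using h1

theorem split_finrank [Module.Free ℤ M] [Module.Finite ℤ M] {B : IntFrm M} {w : M} {e : ℤ}
    (h : FIso B (osum (rk1 e) (restr B (LinearMap.ker (B w))))) :
    Module.finrank ℤ M = Module.finrank ℤ (LinearMap.ker (B w)) + 1 := by
  obtain ⟨f, -⟩ := h
  rw [f.finrank_eq, Module.finrank_prod]
  simp [add_comm]

/-- An isometric map out of a unimodular lattice into a lattice of the same rank is bijective. -/
theorem isometric_bijective [Module.Free ℤ M] [Module.Finite ℤ M] [Module.Free ℤ N]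
    [Module.Finite ℤ N] {B : IntFrm M} {C : IntFrm N} (hB : IsU B)
    (hr : Module.finrank ℤ M = Module.finrank ℤ N) (h : M →ₗ[ℤ] N)
    (hh : ∀ x y, C (h x) (h y) = B x y) : Function.Bijective h := by
  have hinj : Function.Injective h := by
    rw [injective_iff_map_eq_zero]
    intro x hx
    apply hB.nd
    intro y
    rw [← hh, hx]
    simp
  refine ⟨hinj, fun y => ?_⟩
  obtain ⟨v, hv⟩ := hB.surj ((C y).comp h)
  have horth : ∀ x, C (y - h v) (h x) = 0 := by
    intro x
    simp [hh, hv]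
  by_contra hne
  have hz : y - h v ≠ 0 := by
    intro h0
    exact hne ⟨v, (sub_eq_zero.mp h0).symm⟩
  let F : M × ℤ →ₗ[ℤ] N := LinearMap.coprod h (LinearMap.toSpanSingleton ℤ N (y - h v))
  have hF : Function.Injective F := by
    rw [injective_iff_map_eq_zero]
    rintro ⟨x, a⟩ hx
    simp only [F, LinearMap.coprod_apply, LinearMap.toSpanSingleton_apply] at hx
    have hx0 : x = 0 := by
      apply hB.nd
      intro z
      have := congrArg (fun t => C t (h z)) hx
      simp only [map_add, LinearMap.add_apply, hh, map_smul, LinearMap.smul_apply, horth] at this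
      simpa using this
    subst hx0
    simp only [map_zero, zero_add, smul_eq_zero] at hx
    rcases hx with h1 | h1
    · simp [h1]
    · exact absurd h1 hz
  have := LinearMap.finrank_le_finrank_of_injective hF
  rw [Module.finrank_prod, Module.finrank_self] at this
  omega

theorem isometric_FIso [Module.Free ℤ M] [Module.Finite ℤ M] [Module.Free ℤ N]
    [Module.Finite ℤ N] {B : IntFrm M} {C : IntFrm N} (hB : IsU B)
    (hr : Module.finrank ℤ M = Module.finrank ℤ N) (h : M →ₗ[ℤ] N)
    (hh : ∀ x y, C (h x) (h y) = B x y) : FIso B C :=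
  ⟨LinearEquiv.ofBijective h (isometric_bijective hB hr h hh), fun x y => by simp [hh]⟩

/-- The standard form. -/
def stdF (k : ℕ) : IntFrm (Fin k → ℤ) :=
  LinearMap.mk₂ ℤ (fun x y => x ⬝ᵥ y)
    (by intros; simp) (by intros; rw [smul_dotProduct])
    (by intros; simp) (by intros; rw [dotProduct_smul])

theorem stdF_succ (k : ℕ) : FIso (osum (rk1 1) (stdF k)) (stdF (k + 1)) := by
  refine ⟨Fin.consLinearEquiv ℤ (fun _ => ℤ), fun x y => ?_⟩
  simp [stdF, dotProduct, Fin.sum_univ_succ, Fin.consLinearEquiv]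

theorem rank_zero_FIso [Module.Free ℤ M] [Module.Finite ℤ M] [Module.Free ℤ N]
    [Module.Finite ℤ N] (B : IntFrm M) (C : IntFrm N) (h : Module.finrank ℤ M = 0)
    (h' : Module.finrank ℤ N = 0) : FIso B C := by
  have := Module.finrank_zero_iff.mp h
  refine ⟨LinearEquiv.ofFinrankEq M N (h.trans h'.symm), fun x y => ?_⟩
  rw [Subsingleton.elim x 0]
  simp

/-- The form of a matrix. -/
def matF {ι : Type*} [Fintype ι] (G : Matrix ι ι ℤ) : IntFrm (ι → ℤ) :=
  LinearMap.mk₂ ℤ (fun x y => x ⬝ᵥ G *ᵥ y)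
    (by intros; simp) (by intros; rw [smul_dotProduct])
    (by intros; simp [mulVec_add]) (by intros; rw [mulVec_smul, dotProduct_smul])

@[simp] theorem matF_apply {ι : Type*} [Fintype ι] (G : Matrix ι ι ℤ) (x y : ι → ℤ) :
    matF G x y = x ⬝ᵥ G *ᵥ y := rfl

theorem matF_isU {ι : Type*} [Fintype ι] [DecidableEq ι] {G H : Matrix ι ι ℤ} (hs : G.IsSymm)
    (h : H * G = 1) : IsU (matF G) := by
  have h' : G * H = 1 := mul_eq_one_comm.mp h
  have hsym : ∀ x y : ι → ℤ, x ⬝ᵥ G *ᵥ y = y ⬝ᵥ G *ᵥ x := by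
    intro x y
    rw [dotProduct_comm, dotProduct_mulVec, ← mulVec_transpose, hs.eq, dotProduct_comm,
      dotProduct_comm]
  refine ⟨hsym, fun f => ⟨H *ᵥ (fun i => f (Pi.single i 1)), fun y => ?_⟩, fun x hx => ?_⟩
  · rw [matF_apply, hsym, mulVec_mulVec, h', one_mulVec]
    conv_rhs => rw [pi_eq_sum_univ' y]
    simp only [map_sum, dotProduct, map_smul, smul_eq_mul]
  · have h1 : G *ᵥ x = 0 := by
      ext i
      have := hx (Pi.single i 1)
      rw [matF_apply, hsym] at this
      simpa using this
    rw [← one_mulVec x, ← h, ← mulVec_mulVec, h1, mulVec_zero]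

/-- Every form on a free module comes from a matrix. -/
theorem exists_matF [Module.Free ℤ M] [Module.Finite ℤ M] {B : IntFrm M} (hB : IsU B) {k : ℕ}
    (hk : Module.finrank ℤ M = k) : ∃ G : Matrix (Fin k) (Fin k) ℤ, G.IsSymm ∧
      (G.det = 1 ∨ G.det = -1) ∧ FIso (matF G) B := by
  let b := Module.finBasisOfFinrankEq ℤ M hk
  let G : Matrix (Fin k) (Fin k) ℤ := fun i j => B (b i) (b j)
  have hG : ∀ x y, B (b.equivFun.symm x) (b.equivFun.symm y) = matF G x y := by
    intro x y
    rw [Module.Basis.equivFun_symm_apply, Module.Basis.equivFun_symm_apply, matF_apply]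
    simp only [map_sum, map_smul, LinearMap.sum_apply,
      LinearMap.smul_apply, dotProduct, mulVec, smul_eq_mul]
    simp only [Finset.mul_sum]
    rw [Finset.sum_comm]
    refine Finset.sum_congr rfl fun i _ => ?_
    refine Finset.sum_congr rfl fun j _ => ?_
    change _ = x i * (B (b i) (b j) * y j)
    ring
  have hiso : FIso (matF G) B := ⟨b.equivFun.symm, hG⟩
  have hU := hiso.symm.isU hB
  refine ⟨G, ?_, ?_, hiso⟩
  · ext i j
    exact hB.symm _ _
  · choose x hx using fun i : Fin k => hU.surj (LinearMap.proj i)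
    have : (Matrix.of x) * G = 1 := by
      ext i j
      have := hx i (Pi.single j 1)
      simp [Pi.single_apply, matF_apply, dotProduct] at this
      simp [mul_apply, one_apply, this]
    have h2 := congrArg Matrix.det this
    rw [det_mul, det_one] at h2
    exact Int.isUnit_iff.mp (IsUnit.of_mul_eq_one_right _ h2)

theorem exists_short_form [Module.Free ℤ M] [Module.Finite ℤ M] {B : IntFrm M} (hB : IsU B)
    (hP : PD B) {k : ℕ} (hk : Module.finrank ℤ M = k) (h1 : 1 ≤ k) (h16 : k ≤ 16)
    (hev : k = 16 → ∀ x, 2 ∣ B x x) : ∃ y, B y y = 1 ∨ B y y = 4 := by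
  obtain ⟨G, hs, hd, e, he⟩ := exists_matF hB hk
  obtain ⟨y, hy⟩ := exists_short h1 h16 G hs
    (fun x hx => by rw [← matF_apply, ← he]; exact hP _ (by simpa using hx)) hd
    (fun h x => by rw [← matF_apply, ← he]; exact hev h _)
  refine ⟨e y, ?_⟩
  rw [he]
  exact hy

end Forms

section PartB2

/-- The odd unimodular plane. -/
def I11 : IntFrm (ℤ × ℤ) := osum (rk1 1) (rk1 (-1))

theorem I11_isU : IsU I11 := osum_isU (rk1_isU (by norm_num)) (rk1_isU (by norm_num))

@[simp] theorem I11_apply (x y : ℤ × ℤ) : I11 x y = x.1 * y.1 - x.2 * y.2 := by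
  simp [I11]; ring

universe u

theorem norm_four_dual {M : Type u} [AddCommGroup M] {B : IntFrm M}
    (hB : IsU B) {y : M} (hy : B y y = 4) : (∃ z, B y z = 1) ∨ (∃ v, B v v = 1) := by
  obtain ⟨d, hd⟩ : ∃ d, LinearMap.range (B y) = Submodule.span ℤ {d} :=
    (IsPrincipalIdealRing.principal (LinearMap.range (B y))).principal
  have hdvd : ∀ x, ∃ c, B y x = d * c := by
    intro x
    have : B y x ∈ Submodule.span ℤ {d} := hd ▸ LinearMap.mem_range_self (B y) x
    obtain ⟨c, hc⟩ := Submodule.mem_span_singleton.mp this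
    exact ⟨c, by rw [← hc, smul_eq_mul, mul_comm]⟩
  obtain ⟨z, hz⟩ : d ∈ LinearMap.range (B y) := hd ▸ Submodule.mem_span_singleton_self d
  have hd0 : d ≠ 0 := by
    rintro rfl
    obtain ⟨c, hc⟩ := hdvd y
    omega
  choose g hg using hdvd
  let f : M →ₗ[ℤ] ℤ := AddMonoidHom.toIntLinearMap (AddMonoidHom.mk' g (fun a b => by
    apply mul_left_cancel₀ hd0
    rw [mul_add, ← hg, ← hg, ← hg, map_add]))
  obtain ⟨v, hv⟩ := hB.surj f
  have hyv : y = d • v := by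
    rw [← sub_eq_zero]
    apply hB.nd
    intro x
    have : B v x = g x := hv x
    simp [this, hg]
  have h4 : d * (d * B v v) = 4 := by
    rw [hyv] at hy
    simpa using hy
  have hdv : d ∣ 4 := ⟨_, h4.symm⟩
  have h1 : d ≤ 4 := Int.le_of_dvd (by norm_num) hdv
  have h2 : -d ≤ 4 := Int.le_of_dvd (by norm_num) ((neg_dvd).mpr hdv)
  have h3 : -4 ≤ d := by omega
  interval_cases d
  any_goals omega
  · right; exact ⟨v, by omega⟩
  · left; exact ⟨-z, by simp [hz]⟩
  · left; exact ⟨z, hz⟩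
  · right; exact ⟨v, by omega⟩

set_option maxHeartbeats 1000000 in
/-- Splitting off a unit vector after adding the odd plane. -/
theorem neighbour_step {M : Type u} [AddCommGroup M] [Module.Free ℤ M] [Module.Finite ℤ M]
    {B : IntFrm M} (hB : IsU B) (hP : PD B) {k : ℕ} (hk : Module.finrank ℤ M = k + 1)
    (hy : ∃ y, B y y = 1 ∨ B y y = 4) :
    ∃ (N : Type u) (_ : AddCommGroup N) (_ : Module.Free ℤ N) (_ : Module.Finite ℤ N)
      (C : IntFrm N), IsU C ∧ PD C ∧ Module.finrank ℤ N = k ∧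
      FIso (osum I11 B) (osum I11 (osum (rk1 1) C)) := by
  have hone : ∀ w, B w w = 1 → ∃ (N : Type u) (_ : AddCommGroup N) (_ : Module.Free ℤ N)
      (_ : Module.Finite ℤ N) (C : IntFrm N), IsU C ∧ PD C ∧ Module.finrank ℤ N = k ∧
      FIso (osum I11 B) (osum I11 (osum (rk1 1) C)) := by
    intro w hw
    obtain ⟨h1, h2⟩ := split_form hB (by norm_num) hw
    refine ⟨_, inferInstance, inferInstance, inferInstance, _, h1, restr_PD hP _, ?_,
      (FIso.refl I11).osum h2⟩
    have := split_finrank h2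
    omega
  obtain ⟨y, hy | hy⟩ := hy
  · exact hone y hy
  rcases norm_four_dual hB hy with ⟨z, hz⟩ | ⟨v, hv⟩
  swap
  · exact hone v hv
  obtain ⟨α, j, hα⟩ : ∃ α j : ℤ, α * α + B z z = 2 * j + 1 := by
    rcases Int.even_or_odd' (B z z) with ⟨t, ht | ht⟩
    · exact ⟨1, t, by rw [ht]; ring⟩
    · exact ⟨0, t, by rw [ht]; ring⟩
  have hU : IsU (osum I11 B) := osum_isU I11_isU hB
  set F := osum I11 B with hF
  have hzy : B z y = 1 := by rw [hB.symm, hz]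
  obtain ⟨u, hu⟩ : ∃ u : (ℤ × ℤ) × M, u = ((0, 2), y) := ⟨_, rfl⟩
  obtain ⟨w, hw⟩ : ∃ w : (ℤ × ℤ) × M, w = ((1, 2), y) := ⟨_, rfl⟩
  obtain ⟨n, hn⟩ : ∃ n : (ℤ × ℤ) × M, n = ((α, 0), z) := ⟨_, rfl⟩
  have huu : F u u = 0 := by rw [hu, hF]; simp [hy]
  have hww : F w w = 1 := by rw [hw, hF]; simp [hy]
  have hwu : F w u = 0 := by rw [hw, hu, hF]; simp [hy]
  have huw : F u w = 0 := by rw [hU.symm, hwu]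
  have hnn : F n n = 2 * j + 1 := by rw [hn, hF]; simp [hα]
  have hnu : F n u = 1 := by rw [hn, hu, hF]; simp [hzy]
  have hun : F u n = 1 := by rw [hU.symm, hnu]
  obtain ⟨p, hp⟩ : ∃ p, p = n - j • u := ⟨_, rfl⟩
  obtain ⟨q, hq⟩ : ∃ q, q = p - u := ⟨_, rfl⟩
  have hpu : F p u = 1 := by rw [hp]; simp [hnu, huu]
  have hup : F u p = 1 := by rw [hU.symm, hpu]
  have hpp : F p p = 1 := by
    rw [hp]; simp [hnu, huu, hun, hnn]; ring
  have hpq : F p q = 0 := by rw [hq]; simp [hpp, hpu]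
  have hqq : F q q = -1 := by rw [hq]; simp [hpp, hpu, hup, huu]
  obtain ⟨U1, I1⟩ := split_form hU (by norm_num) hpp
  have r1 := split_finrank I1
  let F1 := restr F (LinearMap.ker (F p))
  obtain ⟨U2, I2⟩ := split_form (B := F1) (w := ⟨q, hpq⟩) U1 (by norm_num) hqq
  have r2 := split_finrank I2
  let F2 := restr F1 (LinearMap.ker (F1 ⟨q, hpq⟩))
  have hF2 : ∀ x y, F2 x y = F x.1.1 y.1.1 := fun _ _ => rfl
  have P2 : PD F2 := by
    rintro ⟨⟨⟨⟨a, b⟩, l⟩, hx1⟩, hx2⟩ hx0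
    rw [hF2]
    have e1 : F p ((a, b), l) = 0 := hx1
    have e2 : F q ((a, b), l) = 0 := hx2
    have e3 : F u ((a, b), l) = 0 := by
      have : u = p - q := by rw [hq]; abel
      rw [this, map_sub, LinearMap.sub_apply, e1, e2, sub_zero]
    have e4 : B y l = 2 * b := by
      rw [hu, hF] at e3
      simp at e3
      linarith
    have e4' : B l y = 2 * b := by rw [hB.symm, e4]
    have e5 : F ((a, b), l) ((a, b), l) = a * a - b * b + B l l := by
      rw [hF]; simp
    change 0 < F ((a, b), l) ((a, b), l)
    rw [e5]
    have e6 : B ((4 : ℤ) • l - (2 * b) • y) ((4 : ℤ) • l - (2 * b) • y) =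
        16 * (B l l - b * b) := by
      simp only [map_sub, map_smul, LinearMap.sub_apply, LinearMap.smul_apply, smul_eq_mul, e4,
        e4', hy]
      ring
    by_cases ht : (4 : ℤ) • l - (2 * b) • y = 0
    · have e7 : B l l - b * b = 0 := by
        rw [ht] at e6
        simp at e6
        omega
      by_cases ha : a = 0
      · exfalso
        apply hx0
        have e8 : (4 : ℤ) • (((a, b), l) : (ℤ × ℤ) × M) = (2 * b) • u := by
          rw [hu, ha]
          ext
          · simp
          · simp; ring
          · exact sub_eq_zero.mp ht
        have e9 := congrArg (F p) e8
        rw [map_smul, map_smul, e1, hpu] at e9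
        have hb : b = 0 := by simp at e9; omega
        subst hb ha
        simp only [mul_zero, zero_smul, sub_zero, smul_eq_zero] at ht
        rcases ht with h | h
        · norm_num at h
        · subst h
          ext <;> rfl
      · have h9 := mul_self_pos.mpr ha
        linarith only [h9, e7]
    · have := hP _ ht
      rw [e6] at this
      have h9 := mul_self_nonneg a
      linarith only [h9, this]
  have hw' : ∃ t, F2 t t = 1 := by
    have f1 : F p (w - (F p w) • u) = 0 := by simp [hpu]
    have f2 : F q (w - (F p w) • u) = 0 := by
      rw [hq]
      simp [huw, huu, hpu]
    refine ⟨⟨⟨w - (F p w) • u, f1⟩, f2⟩, ?_⟩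
    rw [hF2]
    simp [hww, hwu, huw, huu]
  obtain ⟨t, ht⟩ := hw'
  obtain ⟨U3, I3⟩ := split_form (B := F2) U2 (by norm_num) ht
  have r3 := split_finrank I3
  refine ⟨_, inferInstance, inferInstance, inferInstance, _, U3, restr_PD P2 _, ?_, ?_⟩
  · rw [Module.finrank_prod, Module.finrank_prod, Module.finrank_self] at r1
    omega
  · refine I1.trans (((FIso.refl _).osum (I2.trans ((FIso.refl _).osum I3))).trans ?_)
    exact (osum_assoc _ _ _).symm

theorem stable_std : ∀ (k : ℕ) {M : Type u} [AddCommGroup M] [Module.Free ℤ M]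
    [Module.Finite ℤ M] {B : IntFrm M}, IsU B → PD B → Module.finrank ℤ M = k → k ≤ 16 →
    (k = 16 → ∀ x, 2 ∣ B x x) → FIso (osum I11 B) (osum I11 (stdF k)) := by
  intro k
  induction k with
  | zero =>
    intro M _ _ _ B hB hP hk _ _
    exact (FIso.refl _).osum (rank_zero_FIso _ _ hk (by simp))
  | succ k ih =>
    intro M _ _ _ B hB hP hk h16 hev
    obtain ⟨N, _, _, _, C, hC, hPC, hr, hi⟩ := neighbour_step hB hP hk
      (exists_short_form hB hP hk (by omega) h16 hev)
    have := ih hC hPC hr (by omega) (by omega)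
    refine hi.trans ((osum_left_comm _ _ _).trans ?_)
    refine ((FIso.refl _).osum this).trans ((osum_left_comm _ _ _).trans ?_)
    exact (FIso.refl _).osum (stdF_succ k)

end PartB2

section PartC

/-- The (negative of the) hyperbolic plane. -/
def Hm : IntFrm (ℤ × ℤ) :=
  LinearMap.mk₂ ℤ (fun x y => -(x.1 * y.2 + x.2 * y.1))
    (by intros; simp; ring) (by intros; simp; ring)
    (by intros; simp; ring) (by intros; simp; ring)

@[simp] theorem Hm_apply (x y : ℤ × ℤ) : Hm x y = -(x.1 * y.2 + x.2 * y.1) := rfl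

theorem Hm_isU : IsU Hm := by
  refine ⟨fun x y => by simp; ring, fun f => ⟨(-f (0, 1), -f (1, 0)), fun y => ?_⟩,
    fun x hx => ?_⟩
  · have : y = y.1 • ((1, 0) : ℤ × ℤ) + y.2 • ((0, 1) : ℤ × ℤ) := by ext <;> simp
    conv_rhs => rw [this]
    rw [map_add, map_smul, map_smul]
    simp
    ring
  · ext
    · simpa using hx (0, 1)
    · simpa using hx (1, 0)

universe u v

theorem half_of_even {M : Type u} [AddCommGroup M] {B : IntFrm M} (hB : IsU B) {d : M}
    (h : ∀ y, ∃ c, B d y = 2 * c) : ∃ z, d = (2 : ℤ) • z := by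
  choose g hg using h
  let f : M →ₗ[ℤ] ℤ := AddMonoidHom.toIntLinearMap (AddMonoidHom.mk' g (fun a b => by
    have h1 := hg (a + b)
    rw [map_add, hg, hg] at h1
    omega))
  obtain ⟨v, hv⟩ := hB.surj f
  refine ⟨v, ?_⟩
  rw [← sub_eq_zero]
  apply hB.nd
  intro x
  have : B v x = g x := hv x
  simp [this, hg]

/-- The embedding of the even lattice, scaled by two. -/
def emb (M : Type u) [AddCommGroup M] : (ℤ × ℤ) × M →ₗ[ℤ] (ℤ × ℤ) × M :=
  AddMonoidHom.toIntLinearMap (AddMonoidHom.mk'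
    (fun x => ((x.1.1 - 2 * x.1.2, x.1.1 + 2 * x.1.2), (2 : ℤ) • x.2)) (fun a b => by
      ext <;> simp <;> ring))

theorem emb_apply {M : Type u} [AddCommGroup M] (x : (ℤ × ℤ) × M) :
    emb M x = ((x.1.1 - 2 * x.1.2, x.1.1 + 2 * x.1.2), (2 : ℤ) • x.2) := rfl

theorem emb_form {M : Type u} [AddCommGroup M] (B : IntFrm M) (x y : (ℤ × ℤ) × M) :
    osum I11 B (emb M x) (emb M y) = 4 * osum Hm B x y := by
  rw [emb_apply, emb_apply]
  simp only [osum_apply, I11_apply, map_smul, LinearMap.smul_apply, smul_eq_mul, Hm_apply]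
  ring

theorem emb_injective {M : Type u} [AddCommGroup M] [Module.Free ℤ M] :
    Function.Injective (emb M) := by
  rw [injective_iff_map_eq_zero]
  rintro ⟨⟨s, t⟩, l⟩ h
  rw [emb_apply] at h
  simp only [Prod.mk_eq_zero, smul_eq_zero] at h
  obtain ⟨⟨h1, h2⟩, h3 | h3⟩ := h
  · norm_num at h3
  · simp only [Prod.mk_eq_zero]
    exact ⟨⟨by omega, by omega⟩, h3⟩

theorem odd_sq_mod (a : ℤ) : ∃ c, a * a = a + 2 * c := by
  obtain ⟨c, hc⟩ := Int.even_mul_succ_self (a - 1)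
  exact ⟨c, by linear_combination hc⟩

theorem even_iso_of_odd_iso {M : Type u} {N : Type v} [AddCommGroup M] [AddCommGroup N]
    [Module.Free ℤ M] [Module.Finite ℤ M] [Module.Free ℤ N] [Module.Finite ℤ N]
    {B : IntFrm M} {C : IntFrm N} (hB : IsU B) (hC : IsU C) (eB : ∀ x, 2 ∣ B x x)
    (eC : ∀ x, 2 ∣ C x x) (h : FIso (osum I11 B) (osum I11 C)) :
    FIso (osum Hm B) (osum Hm C) := by
  -- normalise the sign
  obtain ⟨e, he, p, q, d, hpq, r, hr⟩ : ∃ e : ((ℤ × ℤ) × M) ≃ₗ[ℤ] ((ℤ × ℤ) × N),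
      (∀ x y, osum I11 C (e x) (e y) = osum I11 B x y) ∧ ∃ (p q : ℤ) (d : N),
      e ((1, 1), 0) = ((p, q), (2 : ℤ) • d) ∧ ∃ r, q - p = 4 * r ∧ True := by
    obtain ⟨e, he⟩ := h
    obtain ⟨⟨⟨p, q⟩, d⟩, hd⟩ : ∃ c, e ((1, 1), 0) = c := ⟨_, rfl⟩
    have hchar : ∀ y, ∃ c, osum I11 C y y = osum I11 C ((p, q), d) y + 2 * c := by
      intro y
      obtain ⟨⟨⟨a, b⟩, l⟩, rfl⟩ := e.surjective y
      rw [← hd, he, he]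
      obtain ⟨c1, h1⟩ := odd_sq_mod a
      obtain ⟨c2, h2⟩ := odd_sq_mod b
      obtain ⟨c3, h3⟩ := eB l
      refine ⟨c1 - c2 + c3, ?_⟩
      simp [h1, h2, h3]
      ring
    obtain ⟨c1, h1⟩ := hchar ((1, 0), 0)
    obtain ⟨c2, h2⟩ := hchar ((0, 1), 0)
    simp at h1 h2
    obtain ⟨z, rfl⟩ := half_of_even hC (d := d) (fun y => by
      obtain ⟨c3, h3⟩ := hchar ((0, 0), y)
      obtain ⟨c4, h4⟩ := eC y
      simp [h4] at h3
      exact ⟨c4 - c3, by omega⟩)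
    rcases (by omega : 4 ∣ q - p ∨ 4 ∣ -q - p) with ⟨r, hr⟩ | ⟨r, hr⟩
    · exact ⟨e, he, p, q, z, hd, r, hr, trivial⟩
    · refine ⟨e.trans (((LinearEquiv.refl ℤ ℤ).prodCongr (LinearEquiv.neg ℤ)).prodCongr
        (LinearEquiv.refl ℤ N)), fun x y => ?_, p, -q, z, ?_, r, hr, trivial⟩
      · rw [← he]; simp
      · simp [hd]
  have key : ∀ x, ∃ y, emb N y = e (emb M x) := by
    rintro ⟨⟨s, t⟩, l⟩
    obtain ⟨⟨⟨p', q'⟩, d'⟩, hd'⟩ : ∃ c, e ((-t, t), l) = c := ⟨_, rfl⟩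
    have h1 : e (emb M ((s, t), l)) = ((s * p + 2 * p', s * q + 2 * q'),
        (2 : ℤ) • (s • d + d')) := by
      have : emb M ((s, t), l) = s • ((1, 1), 0) + (2 : ℤ) • ((-t, t), l) := by
        rw [emb_apply]
        ext <;> simp
        ring
      rw [this, map_add, map_smul, map_smul, hpq, hd']
      ext
      · simp
      · simp
      · simp only [Prod.snd_add, Prod.smul_snd, smul_add, smul_smul]
        rw [mul_comm]
    have h2 := he ((-t, t), l) ((-t, t), l)
    rw [hd'] at h2
    obtain ⟨c1, h3⟩ := odd_sq_mod p'
    obtain ⟨c2, h4⟩ := odd_sq_mod q'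
    obtain ⟨c3, h5⟩ := eB l
    obtain ⟨c4, h6⟩ := eC d'
    simp [h3, h4, h5, h6] at h2
    obtain ⟨j, hj⟩ : ∃ j, q' - p' = 2 * j := ⟨c1 - c2 - c3 + c4, by omega⟩
    rw [h1]
    refine ⟨((s * p + 2 * p' + 2 * (s * r + j), s * r + j), s • d + d'), ?_⟩
    rw [emb_apply]
    ext
    · simp
    · simp only
      linear_combination (-s) * hr.1 - 2 * hj
    · rfl
  choose hfun hh using key
  let H : ((ℤ × ℤ) × M) →ₗ[ℤ] ((ℤ × ℤ) × N) :=
    AddMonoidHom.toIntLinearMap (AddMonoidHom.mk' hfun (fun a b => by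
      apply emb_injective
      rw [map_add, hh, hh, hh, map_add, map_add]))
  have hH : ∀ x, emb N (H x) = e (emb M x) := hh
  refine isometric_FIso (osum_isU Hm_isU hB) e.finrank_eq H (fun x y => ?_)
  have := emb_form C (H x) (H y)
  rw [hH, hH, he, emb_form] at this
  omega

end PartC

section PartD

/-- The positive definite `E₈` form. -/
def E8F : IntFrm (Fin 8 → ℤ) := matF (-E8Mat)

theorem E8F_apply (x y : Fin 8 → ℤ) : E8F x y =
    2 * (x 0 * y 0 + x 1 * y 1 + x 2 * y 2 + x 3 * y 3 + x 4 * y 4 + x 5 * y 5 + x 6 * y 6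
      + x 7 * y 7)
    - (x 0 * y 2 + x 2 * y 0 + x 1 * y 3 + x 3 * y 1 + x 2 * y 3 + x 3 * y 2 + x 3 * y 4
      + x 4 * y 3 + x 4 * y 5 + x 5 * y 4 + x 5 * y 6 + x 6 * y 5 + x 6 * y 7 + x 7 * y 6) := by
  simp [E8F, E8Mat, dotProduct, mulVec, Fin.sum_univ_eight]
  ring

/-- The inverse of the `E₈` Gram matrix. -/
def E8Inv : Matrix (Fin 8) (Fin 8) ℤ :=
  !![4, 5, 7, 10, 8, 6, 4, 2;
     5, 8, 10, 15, 12, 9, 6, 3;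
     7, 10, 14, 20, 16, 12, 8, 4;
     10, 15, 20, 30, 24, 18, 12, 6;
     8, 12, 16, 24, 20, 15, 10, 5;
     6, 9, 12, 18, 15, 12, 8, 4;
     4, 6, 8, 12, 10, 8, 6, 3;
     2, 3, 4, 6, 5, 4, 3, 2]

theorem E8F_isU : IsU E8F := by
  refine matF_isU (H := E8Inv) ?_ ?_
  · decide +kernel
  · decide +kernel

theorem E8F_even (x : Fin 8 → ℤ) : 2 ∣ E8F x x := by
  rw [E8F_apply]
  exact ⟨(x 0 * x 0 + x 1 * x 1 + x 2 * x 2 + x 3 * x 3 + x 4 * x 4 + x 5 * x 5 + x 6 * x 6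
      + x 7 * x 7) - (x 0 * x 2 + x 1 * x 3 + x 2 * x 3 + x 3 * x 4 + x 4 * x 5 + x 5 * x 6
      + x 6 * x 7), by ring⟩

theorem E8F_sos (x : Fin 8 → ℤ) : 60 * E8F x x =
    30 * (2 * x 0 - x 2) ^ 2 + 30 * (2 * x 1 - x 3) ^ 2 + 10 * (3 * x 2 - 2 * x 3) ^ 2
    + 2 * (5 * x 3 - 6 * x 4) ^ 2 + 3 * (4 * x 4 - 5 * x 5) ^ 2 + 5 * (3 * x 5 - 4 * x 6) ^ 2
    + 10 * (2 * x 6 - 3 * x 7) ^ 2 + 30 * x 7 ^ 2 := by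
  rw [E8F_apply]
  ring

theorem E8F_PD : PD E8F := by
  intro x hx
  by_contra hn
  have h := E8F_sos x
  have h7 : x 7 ^ 2 = 0 := by nlinarith [sq_nonneg (2 * x 0 - x 2), sq_nonneg (2 * x 1 - x 3), sq_nonneg (3 * x 2 - 2 * x 3), sq_nonneg (5 * x 3 - 6 * x 4), sq_nonneg (4 * x 4 - 5 * x 5), sq_nonneg (3 * x 5 - 4 * x 6), sq_nonneg (2 * x 6 - 3 * x 7), sq_nonneg (x 7)]
  have h6 : (2 * x 6 - 3 * x 7) ^ 2 = 0 := by nlinarith [sq_nonneg (2 * x 0 - x 2), sq_nonneg (2 * x 1 - x 3), sq_nonneg (3 * x 2 - 2 * x 3), sq_nonneg (5 * x 3 - 6 * x 4), sq_nonneg (4 * x 4 - 5 * x 5), sq_nonneg (3 * x 5 - 4 * x 6), sq_nonneg (2 * x 6 - 3 * x 7), sq_nonneg (x 7)]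
  have h5 : (3 * x 5 - 4 * x 6) ^ 2 = 0 := by nlinarith [sq_nonneg (2 * x 0 - x 2), sq_nonneg (2 * x 1 - x 3), sq_nonneg (3 * x 2 - 2 * x 3), sq_nonneg (5 * x 3 - 6 * x 4), sq_nonneg (4 * x 4 - 5 * x 5), sq_nonneg (3 * x 5 - 4 * x 6), sq_nonneg (2 * x 6 - 3 * x 7), sq_nonneg (x 7)]
  have h4 : (4 * x 4 - 5 * x 5) ^ 2 = 0 := by nlinarith [sq_nonneg (2 * x 0 - x 2), sq_nonneg (2 * x 1 - x 3), sq_nonneg (3 * x 2 - 2 * x 3), sq_nonneg (5 * x 3 - 6 * x 4), sq_nonneg (4 * x 4 - 5 * x 5), sq_nonneg (3 * x 5 - 4 * x 6), sq_nonneg (2 * x 6 - 3 * x 7), sq_nonneg (x 7)]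
  have h3 : (5 * x 3 - 6 * x 4) ^ 2 = 0 := by nlinarith [sq_nonneg (2 * x 0 - x 2), sq_nonneg (2 * x 1 - x 3), sq_nonneg (3 * x 2 - 2 * x 3), sq_nonneg (5 * x 3 - 6 * x 4), sq_nonneg (4 * x 4 - 5 * x 5), sq_nonneg (3 * x 5 - 4 * x 6), sq_nonneg (2 * x 6 - 3 * x 7), sq_nonneg (x 7)]
  have h2 : (3 * x 2 - 2 * x 3) ^ 2 = 0 := by nlinarith [sq_nonneg (2 * x 0 - x 2), sq_nonneg (2 * x 1 - x 3), sq_nonneg (3 * x 2 - 2 * x 3), sq_nonneg (5 * x 3 - 6 * x 4), sq_nonneg (4 * x 4 - 5 * x 5), sq_nonneg (3 * x 5 - 4 * x 6), sq_nonneg (2 * x 6 - 3 * x 7), sq_nonneg (x 7)]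
  have h1 : (2 * x 1 - x 3) ^ 2 = 0 := by nlinarith [sq_nonneg (2 * x 0 - x 2), sq_nonneg (2 * x 1 - x 3), sq_nonneg (3 * x 2 - 2 * x 3), sq_nonneg (5 * x 3 - 6 * x 4), sq_nonneg (4 * x 4 - 5 * x 5), sq_nonneg (3 * x 5 - 4 * x 6), sq_nonneg (2 * x 6 - 3 * x 7), sq_nonneg (x 7)]
  have h0 : (2 * x 0 - x 2) ^ 2 = 0 := by nlinarith [sq_nonneg (2 * x 0 - x 2), sq_nonneg (2 * x 1 - x 3), sq_nonneg (3 * x 2 - 2 * x 3), sq_nonneg (5 * x 3 - 6 * x 4), sq_nonneg (4 * x 4 - 5 * x 5), sq_nonneg (3 * x 5 - 4 * x 6), sq_nonneg (2 * x 6 - 3 * x 7), sq_nonneg (x 7)]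
  rw [sq_eq_zero_iff] at h0 h1 h2 h3 h4 h5 h6 h7
  apply hx
  ext i
  fin_cases i <;> simp <;> omega

theorem E8F_nonneg (x : Fin 8 → ℤ) : 0 ≤ E8F x x := by
  by_cases h : x = 0
  · simp [h]
  · exact (E8F_PD x h).le

theorem E8F_eq_zero {x : Fin 8 → ℤ} (h : E8F x x ≤ 0) : x = 0 := by
  by_contra hx
  exact absurd (E8F_PD x hx) (by omega)

/-- The sum of two copies of `E₈`. -/
def EEF : IntFrm ((Fin 8 → ℤ) × (Fin 8 → ℤ)) := osum E8F E8F

theorem EEF_isU : IsU EEF := osum_isU E8F_isU E8F_isU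

theorem EEF_even (x : (Fin 8 → ℤ) × (Fin 8 → ℤ)) : 2 ∣ EEF x x := by
  simpa [EEF] using dvd_add (E8F_even x.1) (E8F_even x.2)

theorem EEF_PD : PD EEF := by
  rintro ⟨x, y⟩ h
  simp only [EEF, osum_apply]
  have hx := E8F_nonneg x
  have hy := E8F_nonneg y
  by_contra hn
  apply h
  rw [E8F_eq_zero (x := x) (by omega), E8F_eq_zero (x := y) (by omega)]
  rfl

theorem EEF_finrank : Module.finrank ℤ ((Fin 8 → ℤ) × (Fin 8 → ℤ)) = 16 := by simp

/-- Sum of the coordinates, bounded via the Weyl vector. -/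
theorem E8F_rho (a : Fin 8 → ℤ) :
    (a 0 + a 1 + a 2 + a 3 + a 4 + a 5 + a 6 + a 7) ^ 2 ≤ 620 * E8F a a := by
  set s := a 0 + a 1 + a 2 + a 3 + a 4 + a 5 + a 6 + a 7 with hs
  have h := E8F_nonneg ((620 : ℤ) • a - s • ![46, 68, 91, 135, 110, 84, 57, 29])
  have h2 : E8F ((620 : ℤ) • a - s • ![46, 68, 91, 135, 110, 84, 57, 29])
      ((620 : ℤ) • a - s • ![46, 68, 91, 135, 110, 84, 57, 29])
      = 620 * (620 * E8F a a - s ^ 2) := by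
    have h3 : E8F a ![46, 68, 91, 135, 110, 84, 57, 29] = s := by
      rw [E8F_apply]; simp; ring
    have h4 : E8F ![46, 68, 91, 135, 110, 84, 57, 29] ![46, 68, 91, 135, 110, 84, 57, 29]
      = 620 := by
      rw [E8F_apply]; simp
    have h5 := E8F_isU.symm a ![46, 68, 91, 135, 110, 84, 57, 29]
    simp only [map_sub, map_smul, LinearMap.sub_apply, LinearMap.smul_apply, smul_eq_mul]
    rw [← h5, h3, h4]
    ring
  nlinarith

theorem e8_key (a : Fin 8 → ℤ) (c : Fin 8 → ℤ) (hc : ∀ i, 0 ≤ c i)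
    (h0 : c 0 = 2 * a 0 - a 2) (h1 : c 1 = 2 * a 1 - a 3) (h2 : c 2 = 2 * a 2 - a 0 - a 3)
    (h3 : c 3 = 2 * a 3 - a 1 - a 2 - a 4) (h4 : c 4 = 2 * a 4 - a 3 - a 5)
    (h5 : c 5 = 2 * a 5 - a 4 - a 6) (h6 : c 6 = 2 * a 6 - a 5 - a 7) (h7 : c 7 = 2 * a 7 - a 6) :
    0 ≤ a 7 ∧ E8F a a + (c 1 ^ 2 + c 2 ^ 2 + c 3 ^ 2 + c 4 ^ 2 + c 5 ^ 2 + c 6 ^ 2 + c 7 ^ 2)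
      ≤ a 7 ^ 2 := by
  have p := hc 0
  have p1 := hc 1
  have p2 := hc 2
  have p3 := hc 3
  have p4 := hc 4
  have p5 := hc 5
  have p6 := hc 6
  have p7 := hc 7
  refine ⟨by omega, ?_⟩
  rw [← sub_nonneg]
  have : a 7 ^ 2 - (E8F a a + (c 1 ^ 2 + c 2 ^ 2 + c 3 ^ 2 + c 4 ^ 2 + c 5 ^ 2 + c 6 ^ 2 + c 7 ^ 2))
    = 2 * c 0 * (c 1 + c 2 + 2 * c 3 + 2 * c 4 + 2 * c 5 + 2 * c 6 + 2 * c 7)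
      + 2 * c 1 * (2 * c 2 + 3 * c 3 + 3 * c 4 + 3 * c 5 + 3 * c 6 + 3 * c 7)
      + c 2 ^ 2 + 2 * c 2 * (4 * c 3 + 4 * c 4 + 4 * c 5 + 4 * c 6 + 4 * c 7)
      + 5 * c 3 ^ 2 + 2 * c 3 * (6 * c 4 + 6 * c 5 + 6 * c 6 + 6 * c 7)
      + 4 * c 4 ^ 2 + 2 * c 4 * (5 * c 5 + 5 * c 6 + 5 * c 7)
      + 3 * c 5 ^ 2 + 2 * c 5 * (4 * c 6 + 4 * c 7)
      + 2 * c 6 ^ 2 + 2 * c 6 * (3 * c 7) + c 7 ^ 2 := by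
    rw [E8F_apply, h0, h1, h2, h3, h4, h5, h6, h7]
    ring
  rw [this]
  positivity

end PartD

section PartD2

/-- The lattice `II_{17,1}` as `U ⊕ E₈ ⊕ E₈`. -/
abbrev VV : Type := (ℤ × ℤ) × ((Fin 8 → ℤ) × (Fin 8 → ℤ))

/-- The form on `VV`. -/
def VF : IntFrm VV := osum Hm EEF

theorem VF_apply (x y : VV) : VF x y =
    -(x.1.1 * y.1.2 + x.1.2 * y.1.1) + (E8F x.2.1 y.2.1 + E8F x.2.2 y.2.2) := by
  simp [VF, EEF]

theorem VF_isU : IsU VF := osum_isU Hm_isU EEF_isU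

/-- The sum of the coordinates. -/
def sm (a : Fin 8 → ℤ) : ℤ := a 0 + a 1 + a 2 + a 3 + a 4 + a 5 + a 6 + a 7

/-- The height function. -/
def hgt (x : VV) : ℤ := 31 * x.1.1 + 30 * x.1.2 - sm x.2.1 - sm x.2.2

theorem hgt_sub_smul (x r : VV) (c : ℤ) : hgt (x - c • r) = hgt x - c * hgt r := by
  simp [hgt, sm]
  ring

theorem hgt_nonneg {x : VV} (h : VF x x = 0) (hm : 0 ≤ x.1.1) (hn : 0 ≤ x.1.2) : 0 ≤ hgt x := by
  rw [VF_apply] at h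
  have h1 := E8F_rho x.2.1
  have h2 := E8F_rho x.2.2
  have h3 : (sm x.2.1 + sm x.2.2) ^ 2 ≤ (31 * x.1.1 + 30 * x.1.2) ^ 2 := by
    unfold sm
    nlinarith [sq_nonneg ((x.2.1 0 + x.2.1 1 + x.2.1 2 + x.2.1 3 + x.2.1 4 + x.2.1 5 + x.2.1 6
      + x.2.1 7) - (x.2.2 0 + x.2.2 1 + x.2.2 2 + x.2.2 3 + x.2.2 4 + x.2.2 5 + x.2.2 6
      + x.2.2 7)), sq_nonneg (31 * x.1.1 - 30 * x.1.2), mul_nonneg hm hn]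
  have h4 := abs_le_of_sq_le_sq' h3 (by positivity)
  unfold hgt
  linarith [h4.2]

variable {M : Type*} [AddCommGroup M] {B : IntFrm M}

/-- `Φ` is an isometry. -/
def IsI (B : IntFrm M) (Φ : ((ℤ × ℤ) × M) ≃ₗ[ℤ] VV) : Prop :=
  ∀ x y, VF (Φ x) (Φ y) = osum Hm B x y

theorem reflect {Φ : ((ℤ × ℤ) × M) ≃ₗ[ℤ] VV} (h : IsI B Φ) {r : VV} (hr : VF r r = 2) :
    ∃ Φ' : ((ℤ × ℤ) × M) ≃ₗ[ℤ] VV, IsI B Φ' ∧ ∀ y, Φ' y = Φ y - VF (Φ y) r • r := by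
  let R : VV →ₗ[ℤ] VV := LinearMap.id - (VF.flip r).smulRight r
  have hR : ∀ y, R y = y - VF y r • r := fun y => rfl
  have hinv : Function.Involutive R := by
    intro y
    rw [hR, hR]
    simp only [map_sub, map_smul, LinearMap.sub_apply, LinearMap.smul_apply, smul_eq_mul, hr]
    module
  refine ⟨Φ.trans (LinearEquiv.ofInvolutive R hinv), fun x y => ?_, fun y => hR _⟩
  have e : ∀ y, (Φ.trans (LinearEquiv.ofInvolutive R hinv)) y = Φ y - VF (Φ y) r • r :=
    fun y => hR _
  rw [e, e]
  simp only [map_sub, map_smul, LinearMap.sub_apply, LinearMap.smul_apply, smul_eq_mul, hr]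
  rw [h x y, VF_isU.symm r (Φ y)]
  ring

/-- The image of the isotropic vector. -/
abbrev img (Φ : ((ℤ × ℤ) × M) ≃ₗ[ℤ] VV) : VV := Φ ((1, 0), 0)

theorem img_iso {Φ : ((ℤ × ℤ) × M) ≃ₗ[ℤ] VV} (h : IsI B Φ) : VF (img Φ) (img Φ) = 0 := by
  rw [img, h]
  simp

theorem exists_min (h : FIso (osum Hm B) VF) : ∃ Φ : ((ℤ × ℤ) × M) ≃ₗ[ℤ] VV, IsI B Φ ∧
    0 ≤ (img Φ).1.1 ∧ 0 ≤ (img Φ).1.2 ∧ ∀ r, VF r r = 2 → hgt r = -1 →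
      0 ≤ (img Φ - VF (img Φ) r • r).1.1 → 0 ≤ (img Φ - VF (img Φ) r • r).1.2 →
      0 ≤ VF (img Φ) r := by
  classical
  have hex : ∃ k : ℕ, ∃ Φ : ((ℤ × ℤ) × M) ≃ₗ[ℤ] VV, IsI B Φ ∧
    0 ≤ (img Φ).1.1 ∧ 0 ≤ (img Φ).1.2 ∧ (hgt (img Φ)).toNat = k := by
    obtain ⟨Φ, hΦ⟩ := h
    have hi : IsI B Φ := hΦ
    have h0 := img_iso hi
    rw [VF_apply] at h0
    have h1 := E8F_nonneg (img Φ).2.1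
    have h2 := E8F_nonneg (img Φ).2.2
    have h3 : 0 ≤ (img Φ).1.1 * (img Φ).1.2 := by nlinarith
    rcases mul_nonneg_iff.1 h3 with ⟨p, q⟩ | ⟨p, q⟩
    · exact ⟨_, Φ, hi, p, q, rfl⟩
    · refine ⟨_, Φ.trans (LinearEquiv.neg ℤ), fun x y => ?_, ?_, ?_, rfl⟩
      · simp [hi x y]
      · simpa using p
      · simpa using q
  obtain ⟨Φ, hi, p, q, hk⟩ := Nat.find_spec hex
  refine ⟨Φ, hi, p, q, fun r hr hh p' q' => ?_⟩
  obtain ⟨Φ', hi', e⟩ := reflect hi hr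
  have e' : img Φ' = img Φ - VF (img Φ) r • r := e _
  have hle : (hgt (img Φ)).toNat ≤ (hgt (img Φ')).toNat := by
    rw [hk]
    exact Nat.find_min' hex ⟨Φ', hi', by rw [e']; exact p', by rw [e']; exact q', rfl⟩
  have g := hgt_nonneg (img_iso hi) p q
  have g' := hgt_nonneg (img_iso hi') (by rw [e']; exact p') (by rw [e']; exact q')
  have : hgt (img Φ') = hgt (img Φ) + VF (img Φ) r := by
    rw [e', hgt_sub_smul, hh]; ring
  omega

theorem e8_simple (a c : Fin 8 → ℤ) (hc : ∀ i, c i = E8F a (Pi.single i 1)) :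
    c 0 = 2 * a 0 - a 2 ∧ c 1 = 2 * a 1 - a 3 ∧ c 2 = 2 * a 2 - a 0 - a 3 ∧
    c 3 = 2 * a 3 - a 1 - a 2 - a 4 ∧ c 4 = 2 * a 4 - a 3 - a 5 ∧
    c 5 = 2 * a 5 - a 4 - a 6 ∧ c 6 = 2 * a 6 - a 5 - a 7 ∧ c 7 = 2 * a 7 - a 6 := by
  simp only [hc, E8F_apply]
  refine ⟨?_, ?_, ?_, ?_, ?_, ?_, ?_, ?_⟩ <;> simp <;> ring

theorem E8F_single (i : Fin 8) : E8F (Pi.single i 1) (Pi.single i 1) = 2 := by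
  revert i
  simp only [E8F_apply]
  decide +kernel

theorem sm_single (i : Fin 8) : sm (Pi.single i 1) = 1 := by
  revert i
  unfold sm
  decide +kernel

/-- The highest root. -/
def theta : Fin 8 → ℤ := ![2, 3, 4, 6, 5, 4, 3, 2]

theorem E8F_theta (a : Fin 8 → ℤ) : E8F a theta = a 7 := by
  rw [E8F_apply]
  simp [theta]
  ring

/-- The vector of the second type. -/
def omega1 : Fin 8 → ℤ := ![4, 5, 7, 10, 8, 6, 4, 2]

theorem e8_concl {a c : Fin 8 → ℤ} (hc : ∀ i, c i = E8F a (Pi.single i 1))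
    (h : c 1 ^ 2 + c 2 ^ 2 + c 3 ^ 2 + c 4 ^ 2 + c 5 ^ 2 + c 6 ^ 2 + c 7 ^ 2 ≤ 0) :
    a = c 0 • omega1 := by
  obtain ⟨h0, h1, h2, h3, h4, h5, h6, h7⟩ := e8_simple a c hc
  have p1 := sq_nonneg (c 1)
  have p2 := sq_nonneg (c 2)
  have p3 := sq_nonneg (c 3)
  have p4 := sq_nonneg (c 4)
  have p5 := sq_nonneg (c 5)
  have p6 := sq_nonneg (c 6)
  have p7 := sq_nonneg (c 7)
  have q1 : c 1 ^ 2 = 0 := by linarith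
  have q2 : c 2 ^ 2 = 0 := by linarith
  have q3 : c 3 ^ 2 = 0 := by linarith
  have q4 : c 4 ^ 2 = 0 := by linarith
  have q5 : c 5 ^ 2 = 0 := by linarith
  have q6 : c 6 ^ 2 = 0 := by linarith
  have q7 : c 7 ^ 2 = 0 := by linarith
  rw [sq_eq_zero_iff] at q1 q2 q3 q4 q5 q6 q7
  ext i
  fin_cases i <;> simp [omega1] <;> omega

set_option maxHeartbeats 1000000 in
theorem dichotomy (h : FIso (osum Hm B) VF) : ∃ Φ : ((ℤ × ℤ) × M) ≃ₗ[ℤ] VV, IsI B Φ ∧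
    ((∃ n, img Φ = ((0, n), (0, 0))) ∨ img Φ = ((2, 2), (omega1, omega1))) := by
  obtain ⟨Φ, hi, hm, hn, hr⟩ := exists_min h
  refine ⟨Φ, hi, ?_⟩
  have h0 := img_iso hi
  have hprim : VF (img Φ) (Φ ((0, -1), 0)) = 1 := by rw [img, hi]; simp
  generalize img Φ = x at *
  obtain ⟨⟨m, n⟩, ⟨a, b⟩⟩ := x
  simp only at hm hn
  have iso : 2 * (m * n) = E8F a a + E8F b b := by
    rw [VF_apply] at h0; simp only at h0; linarith
  have qa := E8F_nonneg a
  have qb := E8F_nonneg b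
  rcases eq_or_lt_of_le hm with hm0 | hm0
  · left
    rw [← hm0] at iso
    have ha := E8F_eq_zero (x := a) (by linarith)
    have hb := E8F_eq_zero (x := b) (by linarith)
    exact ⟨n, by rw [ha, hb, ← hm0]⟩
  right
  -- simple roots of the finite diagrams
  have ca : ∀ i, 0 ≤ E8F a (Pi.single i 1) := by
    intro i
    have := hr ((0, 0), (Pi.single i 1, 0)) (by simp [VF_apply, E8F_single])
      (by simp [hgt, sm_single]; simp [sm]) (by simpa using hm) (by simpa using hn)
    simpa [VF_apply] using this
  have cb : ∀ i, 0 ≤ E8F b (Pi.single i 1) := by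
    intro i
    have := hr ((0, 0), (0, Pi.single i 1)) (by simp [VF_apply, E8F_single])
      (by simp [hgt, sm_single]; simp [sm]) (by simpa using hm) (by simpa using hn)
    simpa [VF_apply] using this
  have pos_n : ∀ y : VV, VF y y = 0 → 0 < y.1.1 → 0 ≤ y.1.2 := by
    intro y hy hy1
    rw [VF_apply] at hy
    have := E8F_nonneg y.2.1
    have := E8F_nonneg y.2.2
    by_contra hneg
    nlinarith
  have refl0 : ∀ r, VF r r = 2 → ∀ y, VF y y = 0 → VF (y - VF y r • r) (y - VF y r • r) = 0 := by
    intro r hr y hy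
    simp only [map_sub, map_smul, LinearMap.sub_apply, LinearMap.smul_apply, smul_eq_mul, hr, hy]
    rw [VF_isU.symm r y]
    ring
  have ta : a 7 ≤ m := by
    have r2 : VF ((0, -1), (-theta, 0)) ((0, -1), (-theta, 0)) = 2 := by
      simp [VF_apply, E8F_theta]; simp [theta]
    have := hr ((0, -1), (-theta, 0)) r2 (by simp [hgt, sm, theta]) (by simpa using hm)
      (pos_n _ (refl0 _ r2 _ h0) (by simpa using hm0))
    simp [VF_apply, E8F_theta] at this
    linarith
  have tb : b 7 ≤ m := by
    have r2 : VF ((0, -1), (0, -theta)) ((0, -1), (0, -theta)) = 2 := by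
      simp [VF_apply, E8F_theta]; simp [theta]
    have := hr ((0, -1), (0, -theta)) r2 (by simp [hgt, sm, theta]) (by simpa using hm)
      (pos_n _ (refl0 _ r2 _ h0) (by simpa using hm0))
    simp [VF_apply, E8F_theta] at this
    linarith
  have tu : m ≤ n := by
    have := hr ((-1, 1), (0, 0)) (by simp [VF_apply]) (by simp [hgt, sm])
      (by simp [VF_apply]; linarith) (by simp [VF_apply]; linarith)
    simp [VF_apply] at this
    linarith
  obtain ⟨g0, g1, g2, g3, g4, g5, g6, g7⟩ := e8_simple a _ (fun i => rfl)
  obtain ⟨f0, f1, f2, f3, f4, f5, f6, f7⟩ := e8_simple b _ (fun i => rfl)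
  obtain ⟨ka, ka'⟩ := e8_key a _ ca g0 g1 g2 g3 g4 g5 g6 g7
  obtain ⟨kb, kb'⟩ := e8_key b _ cb f0 f1 f2 f3 f4 f5 f6 f7
  have sa : a 7 ^ 2 ≤ m * m := by rw [sq]; exact mul_le_mul ta ta ka hm
  have sb : b 7 ^ 2 ≤ m * m := by rw [sq]; exact mul_le_mul tb tb kb hm
  have mn : m * m ≤ m * n := mul_le_mul_of_nonneg_left tu hm
  have za := e8_concl (a := a) (fun i => rfl) (by
    have := sq_nonneg (E8F b (Pi.single 1 1))
    have := sq_nonneg (E8F b (Pi.single 2 1))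
    have := sq_nonneg (E8F b (Pi.single 3 1))
    have := sq_nonneg (E8F b (Pi.single 4 1))
    have := sq_nonneg (E8F b (Pi.single 5 1))
    have := sq_nonneg (E8F b (Pi.single 6 1))
    have := sq_nonneg (E8F b (Pi.single 7 1))
    linarith)
  have zb := e8_concl (a := b) (fun i => rfl) (by
    have := sq_nonneg (E8F a (Pi.single 1 1))
    have := sq_nonneg (E8F a (Pi.single 2 1))
    have := sq_nonneg (E8F a (Pi.single 3 1))
    have := sq_nonneg (E8F a (Pi.single 4 1))
    have := sq_nonneg (E8F a (Pi.single 5 1))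
    have := sq_nonneg (E8F a (Pi.single 6 1))
    have := sq_nonneg (E8F a (Pi.single 7 1))
    linarith)
  have hna : ∀ i, 0 ≤ E8F a (Pi.single i 1) ^ 2 := fun i => sq_nonneg _
  have hnb : ∀ i, 0 ≤ E8F b (Pi.single i 1) ^ 2 := fun i => sq_nonneg _
  have ea : a 7 ^ 2 = m * m := by
    linarith [hna 1, hna 2, hna 3, hna 4, hna 5, hna 6, hna 7, hnb 1, hnb 2, hnb 3, hnb 4, hnb 5,
      hnb 6, hnb 7]
  have eb : b 7 ^ 2 = m * m := by
    linarith [hna 1, hna 2, hna 3, hna 4, hna 5, hna 6, hna 7, hnb 1, hnb 2, hnb 3, hnb 4, hnb 5,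
      hnb 6, hnb 7]
  have emn : m * n = m * m := by
    linarith [hna 1, hna 2, hna 3, hna 4, hna 5, hna 6, hna 7, hnb 1, hnb 2, hnb 3, hnb 4, hnb 5,
      hnb 6, hnb 7]
  have enm : n = m := mul_left_cancel₀ hm0.ne' emn
  have a7 : a 7 = m := (sq_eq_sq₀ ka hm).1 (by rw [ea, sq])
  have b7 : b 7 = m := (sq_eq_sq₀ kb hm).1 (by rw [eb, sq])
  generalize E8F a (Pi.single 0 1) = c at za
  generalize E8F b (Pi.single 0 1) = d at zb
  have c7 : a 7 = 2 * c := by rw [za]; simp [omega1]; ring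
  have d7 : b 7 = 2 * d := by rw [zb]; simp [omega1]; ring
  have hdc : d = c := by omega
  have hx : (((m, n), (a, b)) : VV) = c • ((2, 2), (omega1, omega1)) := by
    rw [za, zb, hdc, enm, ← a7, c7]
    simp [mul_comm]
  rw [hx, map_smul, LinearMap.smul_apply, smul_eq_mul] at hprim
  have : c = 1 := by
    rcases Int.eq_one_or_neg_one_of_mul_eq_one hprim with h | h <;> omega
  rw [hx, this, one_smul]

end PartD2

section PartD3

variable {M : Type*} [AddCommGroup M] {B : IntFrm M}

theorem case_EE [Module.Free ℤ M] [Module.Finite ℤ M] (hB : IsU B)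
    (hr : Module.finrank ℤ M = 16) {Φ : ((ℤ × ℤ) × M) ≃ₗ[ℤ] VV} (hi : IsI B Φ) {n : ℤ}
    (hx : img Φ = ((0, n), (0, 0))) : FIso B EEF := by
  have hn : n ≠ 0 := by
    rintro rfl
    have : Φ ((1, 0), 0) = Φ 0 := by rw [map_zero]; exact hx
    have := Φ.injective this
    simp at this
  have h0 : ∀ l : M, (Φ ((0, 0), l)).1.1 = 0 := by
    intro l
    have h1 := hi ((1, 0), 0) ((0, 0), l)
    change VF (img Φ) _ = _ at h1
    rw [hx, VF_apply] at h1
    simpa [hn] using h1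
  refine isometric_FIso hB (by rw [hr, EEF_finrank])
    ((LinearMap.snd ℤ _ _).comp (Φ.toLinearMap.comp (LinearMap.inr ℤ (ℤ × ℤ) M))) ?_
  intro x y
  have h1 := hi ((0, 0), x) ((0, 0), y)
  rw [VF_apply, h0, h0] at h1
  change EEF (Φ ((0, 0), x)).2 (Φ ((0, 0), y)).2 = B x y
  simpa [EEF] using h1

/-- A basis of type `D₁₆⁺` in the orthogonal complement of the second isotropic vector. -/
def vD : Fin 16 → VV :=
  ![((1, 1), (![3, 2, 4, 5, 4, 3, 2, 1], ![1, 3, 3, 5, 4, 3, 2, 1])),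
    ((0, 0), (Pi.single 2 1, 0)),
    ((0, 0), (Pi.single 3 1, 0)),
    ((0, 0), (Pi.single 4 1, 0)),
    ((0, 0), (Pi.single 5 1, 0)),
    ((0, 0), (Pi.single 6 1, 0)),
    ((0, 0), (Pi.single 7 1, 0)),
    ((0, -1), (-theta, 0)),
    ((-1, 1), (0, 0)),
    ((0, -1), (0, -theta)),
    ((0, 0), (0, Pi.single 7 1)),
    ((0, 0), (0, Pi.single 6 1)),
    ((0, 0), (0, Pi.single 5 1)),
    ((0, 0), (0, Pi.single 4 1)),
    ((0, 0), (0, Pi.single 3 1)),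
    ((0, 0), (0, Pi.single 1 1 + Pi.single 2 1))]

/-- Explicit version of the `E₈` form. -/
def E8c (x y : Fin 8 → ℤ) : ℤ :=
  2 * (x 0 * y 0 + x 1 * y 1 + x 2 * y 2 + x 3 * y 3 + x 4 * y 4 + x 5 * y 5 + x 6 * y 6
      + x 7 * y 7)
    - (x 0 * y 2 + x 2 * y 0 + x 1 * y 3 + x 3 * y 1 + x 2 * y 3 + x 3 * y 2 + x 3 * y 4
      + x 4 * y 3 + x 4 * y 5 + x 5 * y 4 + x 5 * y 6 + x 6 * y 5 + x 6 * y 7 + x 7 * y 6)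

theorem E8F_eq (x y : Fin 8 → ℤ) : E8F x y = E8c x y := E8F_apply x y

theorem vD_gram_aux : (Matrix.of fun i j : Fin 16 =>
    -((vD i).1.1 * (vD j).1.2 + (vD i).1.2 * (vD j).1.1) +
      (E8c (vD i).2.1 (vD j).2.1 + E8c (vD i).2.2 (vD j).2.2)) = D16Mat := by
  decide +kernel

theorem vD_orth_aux : ∀ i : Fin 16,
    -(2 * (vD i).1.2 + 2 * (vD i).1.1) +
      (E8c omega1 (vD i).2.1 + E8c omega1 (vD i).2.2) = 0 := by
  decide +kernel

theorem vD_gram (i j : Fin 16) : VF (vD i) (vD j) = D16Mat i j := by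
  simp only [VF_apply, E8F_eq]
  exact congrFun (congrFun vD_gram_aux i) j

theorem vD_orth (i : Fin 16) : VF ((2, 2), (omega1, omega1)) (vD i) = 0 := by
  simp only [VF_apply, E8F_eq]
  exact vD_orth_aux i

/-- The inverse of the Gram matrix of `D₁₆⁺`. -/
def D16Inv : Matrix (Fin 16) (Fin 16) ℤ :=
  !![4, -2, -4, -6, -8, -10, -12, -14, -16, -18, -20, -22, -24, -26, -28, -15;
     -2, 2, 3, 4, 5, 6, 7, 8, 9, 10, 11, 12, 13, 14, 15, 8;
     -4, 3, 6, 8, 10, 12, 14, 16, 18, 20, 22, 24, 26, 28, 30, 16;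
     -6, 4, 8, 12, 15, 18, 21, 24, 27, 30, 33, 36, 39, 42, 45, 24;
     -8, 5, 10, 15, 20, 24, 28, 32, 36, 40, 44, 48, 52, 56, 60, 32;
     -10, 6, 12, 18, 24, 30, 35, 40, 45, 50, 55, 60, 65, 70, 75, 40;
     -12, 7, 14, 21, 28, 35, 42, 48, 54, 60, 66, 72, 78, 84, 90, 48;
     -14, 8, 16, 24, 32, 40, 48, 56, 63, 70, 77, 84, 91, 98, 105, 56;
     -16, 9, 18, 27, 36, 45, 54, 63, 72, 80, 88, 96, 104, 112, 120, 64;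
     -18, 10, 20, 30, 40, 50, 60, 70, 80, 90, 99, 108, 117, 126, 135, 72;
     -20, 11, 22, 33, 44, 55, 66, 77, 88, 99, 110, 120, 130, 140, 150, 80;
     -22, 12, 24, 36, 48, 60, 72, 84, 96, 108, 120, 132, 143, 154, 165, 88;
     -24, 13, 26, 39, 52, 65, 78, 91, 104, 117, 130, 143, 156, 168, 180, 96;
     -26, 14, 28, 42, 56, 70, 84, 98, 112, 126, 140, 154, 168, 182, 195, 104;
     -28, 15, 30, 45, 60, 75, 90, 105, 120, 135, 150, 165, 180, 195, 210, 112;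
     -15, 8, 16, 24, 32, 40, 48, 56, 64, 72, 80, 88, 96, 104, 112, 60]

theorem D16_isU : IsU (matF D16Mat) := by
  refine matF_isU (H := D16Inv) ?_ ?_
  · decide +kernel
  · decide +kernel

theorem case_D [Module.Free ℤ M] [Module.Finite ℤ M]
    (hr : Module.finrank ℤ M = 16) {Φ : ((ℤ × ℤ) × M) ≃ₗ[ℤ] VV} (hi : IsI B Φ)
    (hx : img Φ = ((2, 2), (omega1, omega1))) : FIso (matF D16Mat) B := by
  let W : (Fin 16 → ℤ) →ₗ[ℤ] VV := Fintype.linearCombination ℤ vD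
  have hW : ∀ c, W c = ∑ i, c i • vD i := fun c => rfl
  have h0 : ∀ c, (Φ.symm (W c)).1.2 = 0 := by
    intro c
    have h1 := hi ((1, 0), 0) (Φ.symm (W c))
    change VF (img Φ) _ = _ at h1
    have h2 : VF (img Φ) (W c) = 0 := by
      rw [hx, hW, map_sum]
      simp only [map_smul, vD_orth, smul_zero, Finset.sum_const_zero]
    rw [LinearEquiv.apply_symm_apply, h2] at h1
    generalize Φ.symm (W c) = z at h1
    simpa using h1.symm
  refine isometric_FIso D16_isU (by rw [hr]; simp)
    ((LinearMap.snd ℤ _ _).comp (Φ.symm.toLinearMap.comp W)) ?_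
  intro x y
  have h1 := hi (Φ.symm (W x)) (Φ.symm (W y))
  rw [LinearEquiv.apply_symm_apply, LinearEquiv.apply_symm_apply, osum_apply, Hm_apply, h0, h0]
    at h1
  have h2 : VF (W x) (W y) = matF D16Mat x y := by
    rw [hW, hW, matF_apply]
    simp only [map_sum, map_smul, LinearMap.sum_apply, LinearMap.smul_apply, vD_gram, smul_eq_mul,
      dotProduct, mulVec]
    simp only [Finset.mul_sum]
    rw [Finset.sum_comm]
    refine Finset.sum_congr rfl fun i _ => Finset.sum_congr rfl fun j _ => ?_
    ring
  rw [← h2, h1]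
  simp

theorem witt_form [Module.Free ℤ M] [Module.Finite ℤ M] (hB : IsU B) (hP : PD B)
    (hE : ∀ x, 2 ∣ B x x) (hr : Module.finrank ℤ M = 16) :
    FIso B EEF ∨ FIso B (matF D16Mat) := by
  have h1 := stable_std 16 hB hP hr le_rfl (fun _ => hE)
  have h2 := stable_std 16 EEF_isU EEF_PD EEF_finrank le_rfl (fun _ => EEF_even)
  have h3 := even_iso_of_odd_iso hB EEF_isU hE EEF_even (h1.trans h2.symm)
  obtain ⟨Φ, hi, ⟨n, hn⟩ | hx⟩ := dichotomy (B := B) h3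
  · exact Or.inl (case_EE hB hr hi hn)
  · exact Or.inr (case_D hr hi hx).symm

theorem EEF_dsum : FIso EEF (matF (dsum (-E8Mat) (-E8Mat))) := by
  refine ⟨(LinearEquiv.sumArrowLequivProdArrow (Fin 8) (Fin 8) ℤ ℤ).symm, ?_⟩
  rintro ⟨a, b⟩ ⟨c, d⟩
  have : ∀ a b : Fin 8 → ℤ, (LinearEquiv.sumArrowLequivProdArrow (Fin 8) (Fin 8) ℤ ℤ).symm (a, b)
    = Sum.elim a b := by
    intro a b
    ext (i | i) <;> rfl
  rw [this, this]
  simp [EEF, E8F, dsum, fromBlocks_mulVec]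

end PartD3

/-- Every positive-definite even unimodular lattice of rank `16` is isometric to
`E₈ ⊕ E₈` or to `D₁₆⁺` (Witt's classification). -/
theorem stmt14 (L : Matrix (Fin 16) (Fin 16) ℤ) (hsym : L.IsSymm) (heven : EvenGram L)
    (hpos : ∀ x : Fin 16 → ℤ, x ≠ 0 → 0 < BF L x x)
    (huni : L.det = 1 ∨ L.det = -1) :
    IsomGram L (dsum (-E8Mat) (-E8Mat)) ∨ IsomGram L D16Mat := by
  have hU : IsU (matF L) := by
    refine matF_isU (H := L.det • L.adjugate) hsym ?_
    rw [smul_mul, adjugate_mul, smul_smul]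
    rcases huni with h | h <;> simp [h]
  rcases witt_form hU (fun x hx => by simpa [BF] using hpos x hx)
    (fun x => by simpa [BF] using heven x) (by simp) with h | h
  · left
    obtain ⟨e, he⟩ := h.trans EEF_dsum
    exact ⟨e, fun x y => by simpa [BF] using he x y⟩
  · right
    obtain ⟨e, he⟩ := h
    exact ⟨e, fun x y => by simpa [BF] using he x y⟩
end
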